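/- arXiv:math/0204206 — 6 statements merged into one kernel-verified Lean document; each statement's English description precedes it below -/
import Mathlib

section
/- Let γ be a non-resonant Gelfand–Zetlin array. Then for all 1 ≤ n ≤ N, 1 ≤ m ≤ N−1, and every function f of the Gelfand–Zetlin variables, the following identities hold pointwise at γ: (E_{nn}(E_{m,m+1}f) − E_{m,m+1}(E_{nn}f))(γ) = (δ_{nm} − δ_{n,m+1})·(E_{m,m+1}f)(γ); (E_{nn}(E_{m+1,m}f) − E_{m+1,m}(E_{nn}f))(γ) = −(δ_{nm} − δ_{n,m+1})·(E_{m+1,m}f)(γ); and, for all 1 ≤ n, m ≤ N−1, (E_{n,n+1}(E_{m+1,m}f) − E_{m+1,m}(E_{n,n+1}f))(γ) = δ_{nm}·((E_{nn} − E_{n+1,n+1})f)(γ). -/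
open Finset

noncomputable section

/-- A Gelfand–Zetlin array: complex values `γ n j`, relevant for `1 ≤ j ≤ n ≤ N`. -/
abbrev GZ := ℕ → ℕ → ℂ

/-- Shift of the single variable `γ n j` by `c`. -/
def gzShift (c : ℂ) (n j : ℕ) (γ : GZ) : GZ :=
  fun a b => if a = n ∧ b = j then γ a b + c else γ a b

/-- The diagonal Gelfand–Zetlin operator `E_{nn}`. -/
def Ediag (ℏ : ℝ) (n : ℕ) (f : GZ → ℂ) : GZ → ℂ := fun γ =>
  (1 / (Complex.I * ℏ)) * ((∑ j ∈ Icc 1 n, γ n j) - ∑ j ∈ Icc 1 (n - 1), γ (n - 1) j) * f γ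

/-- The raising Gelfand–Zetlin operator `E_{n,n+1}`. -/
def Eraise (ℏ : ℝ) (n : ℕ) (f : GZ → ℂ) : GZ → ℂ := fun γ =>
  -(1 / (Complex.I * ℏ)) * ∑ j ∈ Icc 1 n,
    ((∏ r ∈ Icc 1 (n + 1), (γ n j - γ (n + 1) r - Complex.I * ℏ / 2)) /
      ∏ s ∈ (Icc 1 n).erase j, (γ n j - γ n s)) * f (gzShift (-(Complex.I * ℏ)) n j γ)

/-- The lowering Gelfand–Zetlin operator `E_{n+1,n}`. -/
def Elower (ℏ : ℝ) (n : ℕ) (f : GZ → ℂ) : GZ → ℂ := fun γ =>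
  (1 / (Complex.I * ℏ)) * ∑ j ∈ Icc 1 n,
    ((∏ r ∈ Icc 1 (n - 1), (γ n j - γ (n - 1) r + Complex.I * ℏ / 2)) /
      ∏ s ∈ (Icc 1 n).erase j, (γ n j - γ n s)) * f (gzShift (Complex.I * ℏ) n j γ)

/-- Non-resonance: no two same-level entries differ by an integer multiple of `iℏ`. -/
def NonResonant (ℏ : ℝ) (N : ℕ) (γ : GZ) : Prop :=
  ∀ n ∈ Icc 1 (N - 1), ∀ j s : ℕ, 1 ≤ j → j < s → s ≤ n →
    ∀ m : ℤ, (γ n j - γ n s) / (Complex.I * ℏ) ≠ (m : ℂ)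

def gzA (c : ℂ) (n j : ℕ) (γ : GZ) : ℂ :=
  (∏ r ∈ Icc 1 (n + 1), (γ n j - γ (n + 1) r - c / 2)) /
      ∏ s ∈ (Icc 1 n).erase j, (γ n j - γ n s)

def gzB (c : ℂ) (n j : ℕ) (γ : GZ) : ℂ :=
  (∏ r ∈ Icc 1 (n - 1), (γ n j - γ (n - 1) r + c / 2)) /
      ∏ s ∈ (Icc 1 n).erase j, (γ n j - γ n s)

lemma Eraise_eq (ℏ : ℝ) (n : ℕ) (f : GZ → ℂ) (γ : GZ) :
    Eraise ℏ n f γ = -(1 / (Complex.I * ℏ)) * ∑ j ∈ Icc 1 n,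
      gzA (Complex.I * ℏ) n j γ * f (gzShift (-(Complex.I * ℏ)) n j γ) := rfl

lemma Elower_eq (ℏ : ℝ) (n : ℕ) (f : GZ → ℂ) (γ : GZ) :
    Elower ℏ n f γ = (1 / (Complex.I * ℏ)) * ∑ j ∈ Icc 1 n,
      gzB (Complex.I * ℏ) n j γ * f (gzShift (Complex.I * ℏ) n j γ) := rfl

lemma gzShift_self (c : ℂ) (n j : ℕ) (γ : GZ) : gzShift c n j γ n j = γ n j + c := by
  simp [gzShift]

lemma gzShift_row (c : ℂ) {n j a : ℕ} (b : ℕ) (γ : GZ) (h : a ≠ n) :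
    gzShift c n j γ a b = γ a b := by
  simp [gzShift, h]

lemma gzShift_col (c : ℂ) {n j b : ℕ} (a : ℕ) (γ : GZ) (h : b ≠ j) :
    gzShift c n j γ a b = γ a b := by
  simp [gzShift, h]

lemma gzShift_sum (c : ℂ) {m j : ℕ} (hj : j ∈ Icc 1 m) (a : ℕ) (γ : GZ) :
    ∑ k ∈ Icc 1 a, gzShift c m j γ a k = ∑ k ∈ Icc 1 a, γ a k + if a = m then c else 0 := by
  by_cases h : a = m
  · subst h
    rw [← add_sum_erase _ _ hj, ← add_sum_erase _ (fun k => γ a k) hj, gzShift_self,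
      sum_congr rfl (fun k hk => gzShift_col c a γ (ne_of_mem_erase hk))]
    simp; ring
  · simp [gzShift_row c _ γ h, h]

lemma gzShift_comm (c d : ℂ) (n j m k : ℕ) (γ : GZ) :
    gzShift c n j (gzShift d m k γ) = gzShift d m k (gzShift c n j γ) := by
  funext a b
  simp only [gzShift]
  split_ifs <;> ring

lemma gzShift_cancel (c : ℂ) (n j : ℕ) (γ : GZ) :
    gzShift c n j (gzShift (-c) n j γ) = γ := by
  funext a b
  simp only [gzShift]
  split_ifs <;> ring

lemma Ediag_shift (ℏ : ℝ) (hℏ : 0 < ℏ) (c : ℂ) {m j n : ℕ} (hj : j ∈ Icc 1 m) (hn : 1 ≤ n)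
    (f : GZ → ℂ) (γ : GZ) :
    Ediag ℏ n f (gzShift c m j γ) =
      (1 / (Complex.I * ℏ)) * ((∑ j ∈ Icc 1 n, γ n j) - (∑ j ∈ Icc 1 (n - 1), γ (n - 1) j)
        + c * ((if n = m then (1 : ℂ) else 0) - if n = m + 1 then (1 : ℂ) else 0))
        * f (gzShift c m j γ) := by
  have h : (n - 1 = m) ↔ (n = m + 1) := by omega
  simp only [Ediag, gzShift_sum c hj, h]
  split_ifs <;> ring

lemma gz_key (c : ℂ) {n j m k : ℕ} (γ : GZ) (hj : j ∈ Icc 1 n) (hk : k ∈ Icc 1 m)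
    (hne : ¬ (n = m ∧ j = k)) :
    gzA c n j γ * gzB c m k (gzShift (-c) n j γ) =
      gzB c m k γ * gzA c n j (gzShift c m k γ) := by
  by_cases hnm : n = m
  · subst hnm
    have hjk : j ≠ k := fun h => hne ⟨rfl, h⟩
    have hn : 1 ≤ n := by simp at hj; omega
    have h1 : n - 1 ≠ n := by omega
    have h2 : n + 1 ≠ n := by omega
    have hk' : k ∈ (Icc 1 n).erase j := mem_erase.2 ⟨hjk.symm, hk⟩
    have hj' : j ∈ (Icc 1 n).erase k := mem_erase.2 ⟨hjk, hj⟩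
    have e1 : ∏ s ∈ (Icc 1 n).erase j, (γ n j - γ n s) =
      (γ n j - γ n k) * ∏ s ∈ ((Icc 1 n).erase j).erase k, (γ n j - γ n s) :=
      (mul_prod_erase _ _ hk').symm
    have e2 : ∏ s ∈ (Icc 1 n).erase k, (γ n k - γ n s) =
      (γ n k - γ n j) * ∏ s ∈ ((Icc 1 n).erase k).erase j, (γ n k - γ n s) :=
      (mul_prod_erase _ _ hj').symm
    have e3 : ∏ s ∈ (Icc 1 n).erase k, (γ n k - gzShift (-c) n j γ n s) =
      (γ n k - γ n j + c) * ∏ s ∈ ((Icc 1 n).erase k).erase j, (γ n k - γ n s) := by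
      rw [← mul_prod_erase _ _ hj', gzShift_self]
      congr 1
      · ring
      · exact prod_congr rfl fun s hs => by rw [gzShift_col _ _ _ (ne_of_mem_erase hs)]
    have e4 : ∏ s ∈ (Icc 1 n).erase j, (γ n j - gzShift c n k γ n s) =
      (γ n j - γ n k - c) * ∏ s ∈ ((Icc 1 n).erase j).erase k, (γ n j - γ n s) := by
      rw [← mul_prod_erase _ _ hk', gzShift_self]
      congr 1
      · ring
      · exact prod_congr rfl fun s hs => by rw [gzShift_col _ _ _ (ne_of_mem_erase hs)]
    simp only [gzA, gzB, gzShift_row _ _ _ h1, gzShift_row _ _ _ h2, gzShift_col _ _ _ hjk,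
      gzShift_col _ _ _ hjk.symm, e3, e4]
    rw [e1, e2, div_mul_div_comm, div_mul_div_comm]
    congr 1 <;> ring
  · have hmn : m ≠ n := fun h => hnm h.symm
    have hm : 1 ≤ m := by simp at hk; omega
    by_cases h : m = n + 1
    · subst h
      simp only [gzA, gzB, gzShift_row _ _ _ hnm, gzShift_row _ _ _ hmn, Nat.add_sub_cancel]
      rw [div_mul_div_comm, div_mul_div_comm]
      congr 1
      · have e1 : ∏ s ∈ (Icc 1 n).erase j, (γ (n + 1) k - gzShift (-c) n j γ n s + c / 2) =
            ∏ s ∈ (Icc 1 n).erase j, (γ (n + 1) k - γ n s + c / 2) :=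
          prod_congr rfl fun s hs => by rw [gzShift_col _ _ _ (ne_of_mem_erase hs)]
        have e2 : ∏ s ∈ (Icc 1 (n + 1)).erase k,
              (γ n j - gzShift c (n + 1) k γ (n + 1) s - c / 2) =
            ∏ s ∈ (Icc 1 (n + 1)).erase k, (γ n j - γ (n + 1) s - c / 2) :=
          prod_congr rfl fun s hs => by rw [gzShift_col _ _ _ (ne_of_mem_erase hs)]
        rw [← mul_prod_erase _ _ hj, ← mul_prod_erase _ _ hk, ← mul_prod_erase _ _ hj,
          ← mul_prod_erase _ _ hk, gzShift_self, gzShift_self, e1, e2]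
        ring
      · ring
    · have h1 : n + 1 ≠ m := fun e => h e.symm
      have h2 : m - 1 ≠ n := by omega
      simp only [gzA, gzB, gzShift_row _ _ _ hnm, gzShift_row _ _ _ hmn, gzShift_row _ _ _ h1,
        gzShift_row _ _ _ h2]
      ring

open Polynomial in
lemma gz_interp {ι κ : Type*} [DecidableEq ι] (s : Finset ι) (t : Finset κ)
    (v : ι → ℂ) (w : κ → ℂ)
    (hv : Set.InjOn v s) (hst : #t = #s) (hs : 0 < #s) :
    ∑ i ∈ s, (∏ k ∈ t, (v i - w k)) / ∏ j ∈ s.erase i, (v i - v j) =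
      ∑ i ∈ s, v i - ∑ k ∈ t, w k := by
  set P : ℂ[X] := ∏ k ∈ t, (X - C (w k)) with hP
  set Q : ℂ[X] := ∏ i ∈ s, (X - C (v i)) with hQ
  have mP : P.Monic := monic_prod_X_sub_C _ _
  have mQ : Q.Monic := monic_prod_X_sub_C _ _
  have dP : P.degree = #s := by rw [hP, degree_prod]; simp [hst]
  have dQ : Q.degree = #s := by rw [hQ, degree_prod]; simp
  have hd : (P - Q).degree < #s := by
    rw [← dP]
    exact degree_sub_lt_left (dP.trans dQ.symm) mP.ne_zero (by rw [mP, mQ])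
  have := Lagrange.coeff_eq_sum hv hd
  rw [coeff_sub, hQ, prod_X_sub_C_coeff_card_pred _ _ hs, hP, ← hst,
    prod_X_sub_C_coeff_card_pred _ _ (hst ▸ hs)] at this
  rw [sub_neg_eq_add, neg_add_eq_sub] at this
  rw [this]
  refine sum_congr rfl fun i hi => ?_
  congr 1
  rw [eval_sub, eval_prod, eval_prod, prod_eq_zero (s := s) hi (by simp)]
  simp

lemma gz_diag (c : ℂ) (hc : c ≠ 0) {n : ℕ} (hn : 1 ≤ n) (γ : GZ)
    (hγ : ∀ j ∈ Icc 1 n, ∀ s ∈ Icc 1 n, j ≠ s → ∀ m : ℤ, γ n j - γ n s ≠ m * c) :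
    ∑ j ∈ Icc 1 n, (gzA c n j γ * gzB c n j (gzShift (-c) n j γ) -
      gzB c n j γ * gzA c n j (gzShift c n j γ)) =
    -c * (2 * ∑ j ∈ Icc 1 n, γ n j - ∑ j ∈ Icc 1 (n + 1), γ (n + 1) j
      - ∑ j ∈ Icc 1 (n - 1), γ (n - 1) j) := by
  have key := gz_interp ((Icc 1 n).disjSum (Icc 1 n)) ((Icc 1 (n+1)).disjSum (Icc 1 (n-1)))
    (Sum.elim (fun j => γ n j - c / 2) (fun j => γ n j + c / 2))
    (Sum.elim (fun r => γ (n+1) r) (fun r => γ (n-1) r)) ?_ ?_ ?_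
  · have eL : ∀ j, ((Icc 1 n).disjSum (Icc 1 n)).erase (Sum.inl j) =
        ((Icc 1 n).erase j).disjSum (Icc 1 n) := by
      intro j; ext x; cases x <;> simp
    have eR : ∀ j, ((Icc 1 n).disjSum (Icc 1 n)).erase (Sum.inr j) =
        (Icc 1 n).disjSum ((Icc 1 n).erase j) := by
      intro j; ext x; cases x <;> simp
    rw [sum_disjSum, sum_disjSum, sum_disjSum] at key
    simp only [eL, eR, prod_disjSum, Sum.elim_inl, Sum.elim_inr] at key
    rw [← sum_add_distrib] at key
    have e : 2 * ∑ j ∈ Icc 1 n, γ n j - ∑ j ∈ Icc 1 (n + 1), γ (n + 1) j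
      - ∑ j ∈ Icc 1 (n - 1), γ (n - 1) j = ∑ x ∈ Icc 1 n, (γ n x - c / 2) +
        ∑ x ∈ Icc 1 n, (γ n x + c / 2) -
        (∑ x ∈ Icc 1 (n + 1), γ (n + 1) x + ∑ x ∈ Icc 1 (n - 1), γ (n - 1) x) := by
      rw [sum_sub_distrib, sum_add_distrib]; ring
    rw [e, ← key, mul_sum]
    refine sum_congr rfl fun j hj => ?_
    have h1 : n - 1 ≠ n := by omega
    have h2 : n + 1 ≠ n := by omega
    have d1 : ∏ x ∈ Icc 1 n, (γ n j - c / 2 - (γ n x + c / 2)) =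
        (-c) * ∏ x ∈ (Icc 1 n).erase j, (γ n j + -c - γ n x) := by
      rw [← mul_prod_erase _ _ hj]
      congr 1
      · ring
      · exact prod_congr rfl fun x _ => by ring
    have d2 : ∏ x ∈ Icc 1 n, (γ n j + c / 2 - (γ n x - c / 2)) =
        c * ∏ x ∈ (Icc 1 n).erase j, (γ n j + c - γ n x) := by
      rw [← mul_prod_erase _ _ hj]
      congr 1
      · ring
      · exact prod_congr rfl fun x _ => by ring
    have d3 : ∀ d : ℂ, ∏ x ∈ (Icc 1 n).erase j, (γ n j + d - gzShift d n j γ n x) =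
        ∏ x ∈ (Icc 1 n).erase j, (γ n j + d - γ n x) := fun d =>
      prod_congr rfl fun s hs => by rw [gzShift_col _ _ _ (ne_of_mem_erase hs)]
    simp only [gzA, gzB, gzShift_row _ _ _ h1, gzShift_row _ _ _ h2, gzShift_self, d1, d2, d3]
    have p1 : ∏ r ∈ Icc 1 (n - 1), (γ n j + -c - γ (n - 1) r + c / 2) =
        ∏ r ∈ Icc 1 (n - 1), (γ n j - c / 2 - γ (n - 1) r) :=
      prod_congr rfl fun x _ => by ring
    have p2 : ∏ r ∈ Icc 1 (n + 1), (γ n j + c - γ (n + 1) r - c / 2) =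
        ∏ r ∈ Icc 1 (n + 1), (γ n j + c / 2 - γ (n + 1) r) :=
      prod_congr rfl fun x _ => by ring
    have p3 : ∏ r ∈ Icc 1 (n + 1), (γ n j - γ (n + 1) r - c / 2) =
        ∏ r ∈ Icc 1 (n + 1), (γ n j - c / 2 - γ (n + 1) r) :=
      prod_congr rfl fun x _ => by ring
    have p4 : ∏ r ∈ Icc 1 (n - 1), (γ n j - γ (n - 1) r + c / 2) =
        ∏ r ∈ Icc 1 (n - 1), (γ n j + c / 2 - γ (n - 1) r) :=
      prod_congr rfl fun x _ => by ring
    have q1 : ∏ x ∈ (Icc 1 n).erase j, (γ n j - c / 2 - (γ n x - c / 2)) =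
        ∏ x ∈ (Icc 1 n).erase j, (γ n j - γ n x) :=
      prod_congr rfl fun x _ => by ring
    have q2 : ∏ x ∈ (Icc 1 n).erase j, (γ n j + c / 2 - (γ n x + c / 2)) =
        ∏ x ∈ (Icc 1 n).erase j, (γ n j - γ n x) :=
      prod_congr rfl fun x _ => by ring
    rw [p1, p2, p3, p4, q1, q2]
    have hcc : c * c⁻¹ = 1 := mul_inv_cancel₀ hc
    simp only [div_eq_mul_inv, mul_inv, inv_neg]
    generalize (∏ x ∈ (Icc 1 n).erase j, (γ n j - γ n x))⁻¹ = D
    generalize (∏ x ∈ (Icc 1 n).erase j, (γ n j + -c - γ n x))⁻¹ = D1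
    generalize (∏ x ∈ (Icc 1 n).erase j, (γ n j + c - γ n x))⁻¹ = D2
    generalize (∏ r ∈ Icc 1 (n - 1), (γ n j - c * 2⁻¹ - γ (n - 1) r)) = Q1
    generalize (∏ r ∈ Icc 1 (n - 1), (γ n j + c * 2⁻¹ - γ (n - 1) r)) = Q2
    generalize (∏ r ∈ Icc 1 (n + 1), (γ n j - c * 2⁻¹ - γ (n + 1) r)) = P1
    generalize (∏ r ∈ Icc 1 (n + 1), (γ n j + c * 2⁻¹ - γ (n + 1) r)) = P2
    linear_combination (-(P1 * Q1 * D * D1) + P2 * Q2 * D * D2) * hcc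
  · have aux : ∀ j ∈ Icc 1 n, ∀ s ∈ Icc 1 n, ∀ m : ℤ, γ n j - γ n s = m * c → j = s := by
      intro j hj s hs m h
      by_contra hne
      exact hγ j hj s hs hne m h
    have aux0 : ∀ j ∈ Icc 1 n, ∀ s ∈ Icc 1 n, γ n j - γ n s ≠ c := by
      intro j hj s hs h
      have := aux j hj s hs 1 (by rw [h]; simp)
      subst this
      exact hc (by rw [← h]; ring)
    rintro (a | a) ha (b | b) hb hab <;>
      simp only [mem_coe, inl_mem_disjSum, inr_mem_disjSum, Sum.elim_inl, Sum.elim_inr] at ha hb hab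
    · rw [aux a ha b hb 0 (by push_cast; linear_combination hab)]
    · exact absurd (by linear_combination hab) (aux0 a ha b hb)
    · exact absurd (by linear_combination -hab) (aux0 b hb a ha)
    · rw [aux a ha b hb 0 (by push_cast; linear_combination hab)]
  · simp [card_disjSum]; omega
  · simp [card_disjSum]; omega

/-- the Gelfand–Zetlin operators satisfy the `gl(N)` commutation
relations pointwise at every non-resonant array. -/
theorem gz_commutation_relations (ℏ : ℝ) (hℏ : 0 < ℏ) (N : ℕ) (hN : 2 ≤ N)
    (γ : GZ) (hγ : NonResonant ℏ N γ) (f : GZ → ℂ) :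
    (∀ n m : ℕ, 1 ≤ n → n ≤ N → 1 ≤ m → m ≤ N - 1 →
      Ediag ℏ n (Eraise ℏ m f) γ - Eraise ℏ m (Ediag ℏ n f) γ =
        ((if n = m then (1 : ℂ) else 0) - if n = m + 1 then (1 : ℂ) else 0) *
          Eraise ℏ m f γ) ∧
    (∀ n m : ℕ, 1 ≤ n → n ≤ N → 1 ≤ m → m ≤ N - 1 →
      Ediag ℏ n (Elower ℏ m f) γ - Elower ℏ m (Ediag ℏ n f) γ =
        -((if n = m then (1 : ℂ) else 0) - if n = m + 1 then (1 : ℂ) else 0) *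
          Elower ℏ m f γ) ∧
    (∀ n m : ℕ, 1 ≤ n → n ≤ N - 1 → 1 ≤ m → m ≤ N - 1 →
      Eraise ℏ n (Elower ℏ m f) γ - Elower ℏ m (Eraise ℏ n f) γ =
        (if n = m then (1 : ℂ) else 0) * (Ediag ℏ n f γ - Ediag ℏ (n + 1) f γ)) := by
  have hc : Complex.I * (ℏ : ℂ) ≠ 0 := by simp [hℏ.ne']
  refine ⟨?_, ?_, ?_⟩
  · intro n m hn _ hm _
    rw [Eraise_eq ℏ m (Ediag ℏ n f), sum_congr rfl (fun j hj => by
      rw [Ediag_shift ℏ hℏ _ hj hn])]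
    rw [Ediag, Eraise_eq]
    generalize Complex.I * (ℏ : ℂ) = c at *
    generalize ((if n = m then (1 : ℂ) else 0) - if n = m + 1 then (1 : ℂ) else 0) = δ
    simp only [mul_sum]
    rw [← sum_sub_distrib]
    refine sum_congr rfl fun j _ => ?_
    field_simp
    ring
  · intro n m hn _ hm _
    rw [Elower_eq ℏ m (Ediag ℏ n f), sum_congr rfl (fun j hj => by
      rw [Ediag_shift ℏ hℏ _ hj hn])]
    rw [Ediag, Elower_eq]
    generalize Complex.I * (ℏ : ℂ) = c at *
    generalize ((if n = m then (1 : ℂ) else 0) - if n = m + 1 then (1 : ℂ) else 0) = δ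
    simp only [mul_sum]
    rw [← sum_sub_distrib]
    refine sum_congr rfl fun j _ => ?_
    field_simp
    ring
  · intro n m hn hnN hm hmN
    have hres : ∀ j ∈ Icc 1 n, ∀ s ∈ Icc 1 n, j ≠ s → ∀ k : ℤ,
        γ n j - γ n s ≠ k * (Complex.I * (ℏ : ℂ)) := by
      intro j hj s hs hne k h
      rw [mem_Icc] at hj hs
      rcases lt_or_gt_of_ne hne with hlt | hlt
      · exact hγ n (mem_Icc.2 ⟨hn, hnN⟩) j s hj.1 hlt hs.2 k (by rw [div_eq_iff hc, h])
      · exact hγ n (mem_Icc.2 ⟨hn, hnN⟩) s j hs.1 hlt hj.2 (-k)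
          (by rw [div_eq_iff hc]; push_cast; linear_combination -h)
    have hdiag := gz_diag _ hc hn γ hres
    have hkey := fun j hj k hk h =>
      gz_key (Complex.I * (ℏ : ℂ)) (n := n) (m := m) (j := j) (k := k) γ hj hk h
    simp only [Ediag, Eraise_eq, Elower_eq, Nat.add_sub_cancel]
    generalize Complex.I * (ℏ : ℂ) = c at *
    have main : ∑ j ∈ Icc 1 n, ∑ k ∈ Icc 1 m,
        (gzA c n j γ * gzB c m k (gzShift (-c) n j γ) - gzB c m k γ * gzA c n j (gzShift c m k γ))
          * f (gzShift c m k (gzShift (-c) n j γ)) =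
        (if n = m then (1 : ℂ) else 0) * (-c * (2 * ∑ j ∈ Icc 1 n, γ n j
          - ∑ j ∈ Icc 1 (n + 1), γ (n + 1) j - ∑ j ∈ Icc 1 (n - 1), γ (n - 1) j)) * f γ := by
      by_cases hnm : n = m
      · subst hnm
        rw [← hdiag, if_pos rfl, one_mul, sum_mul]
        refine sum_congr rfl fun j hj => ?_
        rw [sum_eq_single_of_mem j hj, gzShift_cancel]
        intro k hk hkj
        rw [hkey j hj k hk (fun h => hkj h.2.symm), sub_self, zero_mul]
      · rw [if_neg hnm, zero_mul, zero_mul]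
        refine sum_eq_zero fun j hj => sum_eq_zero fun k hk => ?_
        rw [hkey j hj k hk (fun h => hnm h.1), sub_self, zero_mul]
    have split : ∑ j ∈ Icc 1 n, ∑ k ∈ Icc 1 m,
        (gzA c n j γ * gzB c m k (gzShift (-c) n j γ) - gzB c m k γ * gzA c n j (gzShift c m k γ))
          * f (gzShift c m k (gzShift (-c) n j γ)) =
        ∑ j ∈ Icc 1 n, gzA c n j γ * ∑ k ∈ Icc 1 m, gzB c m k (gzShift (-c) n j γ) *
            f (gzShift c m k (gzShift (-c) n j γ)) -
        ∑ k ∈ Icc 1 m, gzB c m k γ * ∑ j ∈ Icc 1 n, gzA c n j (gzShift c m k γ) *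
            f (gzShift (-c) n j (gzShift c m k γ)) := by
      simp only [mul_sum]
      rw [sum_comm (s := Icc 1 m), ← sum_sub_distrib]
      refine sum_congr rfl fun j _ => ?_
      rw [← sum_sub_distrib]
      refine sum_congr rfl fun k _ => ?_
      rw [gzShift_comm (-c) c]
      ring
    rw [main] at split
    have pull : ∀ (s : Finset ℕ) (a : ℂ) (u v : ℕ → ℂ),
        ∑ j ∈ s, u j * (a * v j) = a * ∑ j ∈ s, u j * v j := by
      intro s a u v
      rw [mul_sum]
      exact sum_congr rfl fun j _ => by ring
    simp only [pull]
    have hcc : c * c⁻¹ = 1 := mul_inv_cancel₀ hc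
    simp only [one_div]
    generalize (if n = m then (1 : ℂ) else 0) = δ at *
    linear_combination (c⁻¹ * c⁻¹) * split + δ * (2 * ∑ j ∈ Icc 1 n, γ n j
          - ∑ j ∈ Icc 1 (n + 1), γ (n + 1) j - ∑ j ∈ Icc 1 (n - 1), γ (n - 1) j) * f γ * c⁻¹ * hcc
end
end

section
/- Let n ≥ 1, let x_1,…,x_n be pairwise distinct complex numbers, and let m ≥ 0 be an integer. Then Σ_{j=1}^{n} x_j^m / ∏_{s≠j}(x_j − x_s) = Σ x_1^{k_1}⋯x_n^{k_n}, where the sum on the right is over all tuples (k_1,…,k_n) of non-negative integers with k_1 + ⋯ + k_n = m − n + 1 (so in particular the right-hand side equals 0 when m < n − 1, and equals 1 when m = n − 1). -/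
open Finset

lemma aux_h_succ (n d : ℕ) (x : Fin (n + 1) → ℂ) :
    ∑ k ∈ Finset.Nat.antidiagonalTuple (n + 1) d, ∏ i, x i ^ k i =
      ∑ p ∈ Finset.HasAntidiagonal.antidiagonal d, x 0 ^ p.1 *
        ∑ k ∈ Finset.Nat.antidiagonalTuple n p.2, ∏ i : Fin n, x i.succ ^ k i := by
  simp_rw [Finset.mul_sum]
  rw [Finset.sum_sigma']
  refine Finset.sum_bij' (fun k _ => ⟨(k 0, ∑ i : Fin n, k i.succ), fun i => k i.succ⟩)
    (fun q _ => Fin.cons q.1.1 q.2) ?_ ?_ ?_ ?_ ?_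
  · intro k hk
    simp only [Finset.Nat.mem_antidiagonalTuple, Fin.sum_univ_succ] at hk
    simp [Finset.Nat.mem_antidiagonalTuple, hk]
  · rintro ⟨⟨a, b⟩, k⟩ hk
    simp only [Finset.mem_sigma, Finset.HasAntidiagonal.mem_antidiagonal, Finset.Nat.mem_antidiagonalTuple] at hk
    simp [Finset.Nat.mem_antidiagonalTuple, Fin.sum_univ_succ, hk]
  · intro k hk
    ext i
    refine Fin.cases ?_ ?_ i <;> simp
  · rintro ⟨⟨a, b⟩, k⟩ hk
    simp only [Finset.mem_sigma, Finset.HasAntidiagonal.mem_antidiagonal, Finset.Nat.mem_antidiagonalTuple] at hk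
    obtain ⟨h1, rfl⟩ := hk
    simp
  · intro k hk
    simp [Fin.prod_univ_succ]

lemma aux_h_rec (n d : ℕ) (x : Fin (n + 1) → ℂ) :
    ∑ k ∈ Finset.Nat.antidiagonalTuple (n + 1) (d + 1), ∏ i, x i ^ k i =
      x 0 * ∑ k ∈ Finset.Nat.antidiagonalTuple (n + 1) d, ∏ i, x i ^ k i +
        ∑ k ∈ Finset.Nat.antidiagonalTuple n (d + 1), ∏ i : Fin n, x i.succ ^ k i := by
  rw [aux_h_succ, aux_h_succ, Finset.Nat.sum_antidiagonal_succ, add_comm]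
  simp [pow_succ', mul_assoc]
  rw [Finset.mul_sum]

lemma aux_base (n : ℕ) (x : Fin (n + 2) → ℂ) (hx : Function.Injective x) :
    ∑ j, 1 / ∏ s ∈ Finset.univ.erase j, (x j - x s) = 0 := by
  have h := Lagrange.coeff_eq_sum (s := Finset.univ) (v := x) hx.injOn
    (P := (1 : Polynomial ℂ)) (by simp; norm_cast; omega)
  simpa [Polynomial.coeff_one] using h.symm

lemma aux_L_rec (n m : ℕ) (x : Fin (n + 1) → ℂ) (hx : Function.Injective x) :
    ∑ j, x j ^ (m + 1) / ∏ s ∈ Finset.univ.erase j, (x j - x s) =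
      x 0 * ∑ j, x j ^ m / ∏ s ∈ Finset.univ.erase j, (x j - x s) +
      ∑ j : Fin n, x j.succ ^ m / ∏ s ∈ Finset.univ.erase j, (x j.succ - x s.succ) := by
  have key : ∀ j : Fin n, ∏ s ∈ Finset.univ.erase j.succ, (x j.succ - x s) =
      (x j.succ - x 0) * ∏ s ∈ Finset.univ.erase j, (x j.succ - x s.succ) := by
    intro j
    have : Finset.univ.erase j.succ =
        insert 0 ((Finset.univ.erase j).map (Fin.succEmb n)) := by
      ext i
      refine Fin.cases ?_ ?_ i
      · simp [Fin.succ_ne_zero, eq_comm]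
      · intro i; simp [Fin.succ_ne_zero]
    rw [this, Finset.prod_insert (by simp [Fin.succ_ne_zero]), Finset.prod_map]
    rfl
  rw [Fin.sum_univ_succ, Fin.sum_univ_succ, mul_add, Finset.mul_sum, add_assoc,
    ← Finset.sum_add_distrib]
  congr 1
  · ring
  · refine Finset.sum_congr rfl fun j _ => ?_
    rw [key]
    have h1 : x j.succ - x 0 ≠ 0 := sub_ne_zero.2 fun h => Fin.succ_ne_zero j (hx h)
    have h2 : ∏ s ∈ Finset.univ.erase j, (x j.succ - x s.succ) ≠ 0 := by
      refine Finset.prod_ne_zero_iff.2 fun s hs => sub_ne_zero.2 fun h => ?_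
      exact (Finset.mem_erase.1 hs).1 (Fin.succ_injective _ (hx h)).symm
    field_simp
    ring

lemma aux_main (n m : ℕ) (x : Fin n → ℂ) (hx : Function.Injective x) :
    ∑ j : Fin n, x j ^ m / ∏ s ∈ Finset.univ.erase j, (x j - x s) =
      if n ≤ m + 1 then ∑ k ∈ Finset.Nat.antidiagonalTuple n (m + 1 - n), ∏ i, x i ^ k i
      else 0 := by
  induction n generalizing m with
  | zero => simp
  | succ n ihn =>
    induction m with
    | zero =>
      cases n with
      | zero => simp
      | succ n => simpa using aux_base n x hx
    | succ m ihm =>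
      rw [aux_L_rec n m x hx, ihm, ihn m (fun i => x i.succ)
        (hx.comp (Fin.succ_injective n))]
      rcases lt_trichotomy n (m + 1) with h | h | h
      · rw [if_pos (by omega), if_pos (by omega), if_pos (by omega),
          show m + 1 + 1 - (n + 1) = (m - n) + 1 by omega, aux_h_rec,
          show m + 1 - (n + 1) = m - n by omega, show m + 1 - n = m - n + 1 by omega]
      · subst h
        simp [Finset.Nat.antidiagonalTuple_zero_right]
      · rw [if_neg (by omega), if_neg (by omega), if_neg (by omega)]
        simp


/-- for pairwise distinct `x_1, …, x_n` and `m ≥ 0`,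
`Σ_j x_j^m / ∏_{s≠j}(x_j − x_s)` equals the complete homogeneous symmetric
polynomial of degree `m − n + 1` (the sum over all tuples of non-negative
integers `k` with `k_1 + ⋯ + k_n = m − n + 1`, i.e. `Σ k + n = m + 1`). -/
theorem sum_pow_div_prod_sub_eq_complete_homogeneous (n : ℕ) (hn : 1 ≤ n)
    (x : Fin n → ℂ) (hx : Function.Injective x) (m : ℕ) :
    ∑ j : Fin n, x j ^ m / ∏ s ∈ Finset.univ.erase j, (x j - x s) =
      ∑ k ∈ Finset.filter (fun k : Fin n → ℕ => (∑ i, k i) + n = m + 1)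
          (Fintype.piFinset fun _ : Fin n => Finset.range (m + 2)),
        ∏ i, x i ^ k i := by

  rw [aux_main n m x hx]
  split_ifs with h
  · refine Finset.sum_congr ?_ fun _ _ => rfl
    ext k
    simp only [Finset.Nat.mem_antidiagonalTuple, Finset.mem_filter, Fintype.mem_piFinset,
      Finset.mem_range]
    constructor
    · intro hk
      refine ⟨fun i => ?_, by omega⟩
      have := Finset.single_le_sum (f := k) (fun _ _ => Nat.zero_le _) (Finset.mem_univ i)
      omega
    · rintro ⟨_, hk⟩
      omega
  · symm
    apply Finset.sum_eq_zero
    intro k hk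
    have := (Finset.mem_filter.1 hk).2
    omega
end

section
/- For every integer m ≥ 1 and all real numbers a_1,…,a_m, b_1,…,b_m, one has Σ_{j=1}^{m} Σ_{k=1}^{m} |a_j − b_k| − Σ_{1≤j<k≤m} |a_j − a_k| − Σ_{1≤j<k≤m} |b_j − b_k| ≥ 0. -/
open Finset

lemma aux_int (R x y : ℝ) (hx : -R ≤ x) (hy : -R ≤ y) :
    MeasureTheory.Integrable (fun t => (Set.Ioc (-R) x).indicator (1 : ℝ → ℝ) t *
      (Set.Ioc (-R) y).indicator (1 : ℝ → ℝ) t) ∧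
    ∫ t, (Set.Ioc (-R) x).indicator (1 : ℝ → ℝ) t *
      (Set.Ioc (-R) y).indicator (1 : ℝ → ℝ) t = min x y + R := by
  have h : (fun t => (Set.Ioc (-R) x).indicator (1 : ℝ → ℝ) t *
      (Set.Ioc (-R) y).indicator (1 : ℝ → ℝ) t) =
      (Set.Ioc (-R) (min x y)).indicator (1 : ℝ → ℝ) := by
    funext t
    simp only [Set.indicator_apply, Set.mem_Ioc, le_min_iff, Pi.one_apply]
    split_ifs <;> simp_all
  rw [h]
  constructor
  · rw [MeasureTheory.integrable_indicator_iff measurableSet_Ioc]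
    exact MeasureTheory.integrableOn_const (by simp) (by simp)
  · rw [MeasureTheory.integral_indicator_one measurableSet_Ioc]
    have : -R ≤ min x y := le_min hx hy
    rw [MeasureTheory.measureReal_def, Real.volume_Ioc, ENNReal.toReal_ofReal (by linarith)]
    ring

lemma aux_sym (m : ℕ) (a : Fin m → ℝ) :
    ∑ j : Fin m, ∑ k : Fin m, |a j - a k| =
      2 * ∑ j : Fin m, ∑ k ∈ Finset.Ioi j, |a j - a k| := by
  have h1 : ∑ j : Fin m, ∑ k ∈ Finset.Ioi j, |a j - a k| =
      ∑ j : Fin m, ∑ k : Fin m, if j < k then |a j - a k| else 0 := by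
    refine sum_congr rfl fun j _ => ?_
    rw [← Finset.sum_filter]
    congr 1
    ext k; simp
  have h2 := h1
  rw [Finset.sum_comm] at h2
  rw [two_mul]
  nth_rw 1 [h1]
  rw [h2, ← sum_add_distrib]
  refine sum_congr rfl fun j _ => ?_
  rw [← sum_add_distrib]
  refine sum_congr rfl fun k _ => ?_
  rcases lt_trichotomy j k with h | h | h
  · simp [h, h.not_gt]
  · simp [h]
  · simp [h, h.not_gt, abs_sub_comm]

lemma aux_abs (x y : ℝ) : |x - y| = x + y - 2 * min x y := by
  rcases le_total x y with h | h
  · rw [min_eq_left h, abs_of_nonpos (by linarith)]; ring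
  · rw [min_eq_right h, abs_of_nonneg (by linarith)]; ring

/-- Gradshteyn–Ryzhik 11.118: for real numbers `a_1,…,a_m` and
`b_1,…,b_m`, `Σ_{j,k} |a_j − b_k| − Σ_{j<k} |a_j − a_k| − Σ_{j<k} |b_j − b_k| ≥ 0`. -/
theorem abs_sum_inequality (m : ℕ) (hm : 1 ≤ m) (a b : Fin m → ℝ) :
    0 ≤ (∑ j : Fin m, ∑ k : Fin m, |a j - b k|) -
        (∑ j : Fin m, ∑ k ∈ Finset.Ioi j, |a j - a k|) -
        (∑ j : Fin m, ∑ k ∈ Finset.Ioi j, |b j - b k|) := by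
  obtain ⟨R, hRa, hRb⟩ : ∃ R : ℝ, (∀ j, -R ≤ a j) ∧ (∀ j, -R ≤ b j) := by
    refine ⟨∑ j, (|a j| + |b j|), fun j => ?_, fun j => ?_⟩ <;>
    · have := Finset.single_le_sum (f := fun j => |a j| + |b j|)
        (fun i _ => by positivity) (Finset.mem_univ j)
      have h1 := neg_abs_le (a j)
      have h2 := neg_abs_le (b j)
      have h3 := abs_nonneg (a j)
      have h4 := abs_nonneg (b j)
      linarith
  have hA := aux_sym m a
  have hB := aux_sym m b
  set f : ℝ → ℝ → ℝ := fun x t => (Set.Ioc (-R) x).indicator (1 : ℝ → ℝ) t with hf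
  have I : ∀ x y, -R ≤ x → -R ≤ y → MeasureTheory.Integrable (fun t => f x t * f y t) :=
    fun x y hx hy => (aux_int R x y hx hy).1
  have V : ∀ x y, -R ≤ x → -R ≤ y → ∫ t, f x t * f y t = min x y + R :=
    fun x y hx hy => (aux_int R x y hx hy).2
  clear_value f
  have key : 0 ≤ ∫ t, (∑ j, (f (a j) t - f (b j) t)) ^ 2 :=
    MeasureTheory.integral_nonneg fun t => sq_nonneg _
  have e : (fun t => (∑ j, (f (a j) t - f (b j) t)) ^ 2) = fun t => ∑ j, ∑ k,
      (f (a j) t * f (a k) t - f (a j) t * f (b k) t - f (b j) t * f (a k) t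
        + f (b j) t * f (b k) t) := by
    funext t
    rw [sq, sum_mul_sum]
    refine sum_congr rfl fun j _ => sum_congr rfl fun k _ => ?_
    ring
  have i1 := fun j k => I _ _ (hRa j) (hRa k)
  have i2 := fun j k => I _ _ (hRa j) (hRb k)
  have i3 := fun j k => I _ _ (hRb j) (hRa k)
  have i4 := fun j k => I _ _ (hRb j) (hRb k)
  have i5 : ∀ j k, MeasureTheory.Integrable (fun t => f (a j) t * f (a k) t - f (a j) t * f (b k) t) :=
    fun j k => (i1 j k).sub (i2 j k)
  have i6 : ∀ j k, MeasureTheory.Integrable (fun t => f (a j) t * f (a k) t - f (a j) t * f (b k) t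
      - f (b j) t * f (a k) t) :=
    fun j k => (i5 j k).sub (i3 j k)
  have ii : ∀ j k, MeasureTheory.Integrable (fun t => f (a j) t * f (a k) t - f (a j) t * f (b k) t
      - f (b j) t * f (a k) t + f (b j) t * f (b k) t) :=
    fun j k => (i6 j k).add (i4 j k)
  have e2 : ∫ t, (∑ j, (f (a j) t - f (b j) t)) ^ 2 = ∑ j, ∑ k,
      (min (a j) (a k) - min (a j) (b k) - min (b j) (a k) + min (b j) (b k)) := by
    rw [e, MeasureTheory.integral_finsetSum _
      (fun j _ => MeasureTheory.integrable_finsetSum _ fun k _ => ii j k)]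
    refine sum_congr rfl fun j _ => ?_
    rw [MeasureTheory.integral_finsetSum _ (fun k _ => ii j k)]
    refine sum_congr rfl fun k _ => ?_
    rw [MeasureTheory.integral_add (i6 j k) (i4 j k),
      MeasureTheory.integral_sub (i5 j k) (i3 j k),
      MeasureTheory.integral_sub (i1 j k) (i2 j k),
      V _ _ (hRa j) (hRa k), V _ _ (hRa j) (hRb k), V _ _ (hRb j) (hRa k),
      V _ _ (hRb j) (hRb k)]
    ring
  rw [e2] at key
  have hC : ∑ j, ∑ k, |b j - a k| = ∑ j, ∑ k, |a j - b k| := by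
    rw [Finset.sum_comm]
    exact sum_congr rfl fun j _ => sum_congr rfl fun k _ => abs_sub_comm _ _
  have e3 : 2 * ∑ j, ∑ k,
      (min (a j) (a k) - min (a j) (b k) - min (b j) (a k) + min (b j) (b k)) =
      (∑ j, ∑ k, |a j - b k|) + (∑ j, ∑ k, |b j - a k|) - (∑ j, ∑ k, |a j - a k|)
        - (∑ j, ∑ k, |b j - b k|) := by
    simp only [mul_sum, ← sum_add_distrib, ← sum_sub_distrib]
    refine sum_congr rfl fun j _ => sum_congr rfl fun k _ => ?_
    simp only [aux_abs]
    ring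
  linarith
end

section
/- Fix ℏ > 0, N ≥ 2, and real numbers γ_{N1},…,γ_{NN}. For any two polynomials q_1, q_2 in the N(N−1)/2 variables (γ_{nj})_{1≤j≤n≤N−1} with complex coefficients, the function ℝ^{N(N−1)/2} → ℂ given by (γ_{nj}) ↦ μ_0(γ)·conj(q_1(γ))·q_2(γ)·w_N(γ) is Lebesgue integrable on ℝ^{N(N−1)/2}; in particular the pairing integral ⟨q_1, q_2 w_N⟩ = ∫_{ℝ^{N(N−1)/2}} μ_0(γ)·conj(q_1(γ))·q_2(γ)·w_N(γ) ∏ dγ_{nj} converges absolutely. -/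
open Finset MeasureTheory

noncomputable section

/-- Index set of the Gelfand–Zetlin variables `(n, j)` with `1 ≤ j ≤ n ≤ N − 1`
(the pair `(p.1, p.2)` encodes `(n, j)`). -/
abbrev GZIdx (N : ℕ) := {p : Fin N × Fin N // 1 ≤ (p.2 : ℕ) ∧ (p.2 : ℕ) ≤ (p.1 : ℕ)}

/-- The Gelfand–Zetlin array with lower levels given by the real variables `ξ`
and top row `g`. -/
def gzOf (N : ℕ) (g : ℕ → ℂ) (ξ : GZIdx N → ℝ) : GZ := fun n j =>
  if h : 1 ≤ j ∧ j ≤ n ∧ n < N then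
    ((ξ ⟨(⟨n, h.2.2⟩, ⟨j, lt_of_le_of_lt h.2.1 h.2.2⟩), h.1, h.2.1⟩ : ℝ) : ℂ)
  else g j

/-- `ℏ^z := exp(z log ℏ)`. -/
def hpow (ℏ : ℝ) (z : ℂ) : ℂ := Complex.exp (z * (Real.log ℏ : ℂ))

/-- The factor `s_n(γ_n, γ_{n+1})`. -/
def sW (ℏ : ℝ) (n : ℕ) (γ : GZ) : ℂ :=
  ∏ k ∈ Icc 1 n, ∏ m ∈ Icc 1 (n + 1),
    hpow ℏ ((γ n k - γ (n + 1) m) / (Complex.I * ℏ) + 1 / 2) *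
      Complex.Gamma ((γ n k - γ (n + 1) m) / (Complex.I * ℏ) + 1 / 2)

/-- The Whittaker vector `w_N`. -/
def wWhit (ℏ : ℝ) (N : ℕ) (γ : GZ) : ℂ :=
  Complex.exp (-((Real.pi / ℏ : ℝ) : ℂ) *
      ∑ n ∈ Icc 1 (N - 1), ((n : ℂ) - 1) * ∑ j ∈ Icc 1 n, γ n j) *
    ∏ n ∈ Icc 1 (N - 1), sW ℏ n γ

/-- The measure density `μ_0`. -/
def mu0 (ℏ : ℝ) (N : ℕ) (γ : GZ) : ℂ :=
  ∏ n ∈ Icc 2 (N - 1), ∏ p ∈ Icc 1 n, ∏ s ∈ Ico 1 p,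
    (γ n s - γ n p) *
      (Complex.exp (((2 * Real.pi / ℏ : ℝ) : ℂ) * γ n p) -
        Complex.exp (((2 * Real.pi / ℏ : ℝ) : ℂ) * γ n s))

/-! ### Layer-cake calculus -/

def QInt (F : ℝ → ℝ) (v : ℝ) : Prop := Integrable F ∧ ∫ t, F t = v

lemma QInt.sum {α : Type*} (s : Finset α) (F : α → ℝ → ℝ) (v : α → ℝ)
    (h : ∀ a ∈ s, QInt (F a) (v a)) : QInt (fun t => ∑ a ∈ s, F a t) (∑ a ∈ s, v a) := by
  refine ⟨integrable_finsetSum _ fun a ha => (h a ha).1, ?_⟩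
  rw [integral_finsetSum _ fun a ha => (h a ha).1]
  exact Finset.sum_congr rfl fun a ha => (h a ha).2

lemma QInt.sub {F G : ℝ → ℝ} {v w : ℝ} (h : QInt F v) (h' : QInt G w) :
    QInt (fun t => F t - G t) (v - w) :=
  ⟨h.1.sub h'.1, by rw [integral_sub h.1 h'.1, h.2, h'.2]⟩

lemma QInt.const_mul {F : ℝ → ℝ} {v : ℝ} (c : ℝ) (h : QInt F v) :
    QInt (fun t => c * F t) (c * v) :=
  ⟨h.1.const_mul c, by rw [integral_const_mul, h.2]⟩

def hv (t a : ℝ) : ℤ := if a < t then 1 else 0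

lemma hv_cases (t a : ℝ) : hv t a = 0 ∨ hv t a = 1 := by
  unfold hv; split_ifs <;> simp

lemma QInt.base (a b : ℝ) : QInt (fun t => ((|hv t a - hv t b| : ℤ) : ℝ)) |a - b| := by
  have : (fun t => ((|hv t a - hv t b| : ℤ) : ℝ)) = (Set.uIoc a b).indicator (fun _ => (1 : ℝ)) := by
    funext t
    unfold hv
    by_cases h1 : a < t <;> by_cases h2 : b < t <;>
      simp [Set.indicator, Set.mem_uIoc, h1, h2, not_le.mpr, not_lt.mp]
  rw [this]
  constructor
  · rw [integrable_indicator_iff measurableSet_uIoc]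
    simp [integrableOn_const_iff, Set.uIoc]
  · rw [integral_indicator measurableSet_uIoc]
    simp [Set.uIoc, Measure.real, abs_sub_comm, max_sub_min_eq_abs]

lemma abs01 {a b : ℤ} (ha : a = 0 ∨ a = 1) (hb : b = 0 ∨ b = 1) :
    |a - b| = a + b - 2 * a * b := by
  rcases ha with rfl | rfl <;> rcases hb with rfl | rfl <;> simp

lemma pairs01 (h : ℕ → ℤ) (hh : ∀ j, h j = 0 ∨ h j = 1) (n : ℕ) :
    ∑ p ∈ Icc 1 n, ∑ s ∈ Ico 1 p, |h s - h p| =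
      (∑ j ∈ Icc 1 n, h j) * (n - ∑ j ∈ Icc 1 n, h j) := by
  induction n with
  | zero => simp
  | succ n ih =>
    rw [Finset.sum_Icc_succ_top (by omega), ih, Finset.sum_Icc_succ_top (by omega)]
    have e : Ico 1 (n + 1) = Icc 1 n := by ext; simp
    rw [e, Finset.sum_congr rfl fun s _ => abs01 (hh s) (hh (n + 1))]
    simp only [Finset.sum_sub_distrib, Finset.sum_add_distrib, ← Finset.sum_mul, ← Finset.mul_sum,
      Finset.sum_const, Nat.card_Icc]
    have : h (n + 1) * h (n + 1) = h (n + 1) := by rcases hh (n + 1) with e | e <;> simp [e]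
    push_cast
    simp only [nsmul_eq_mul]
    linear_combination (-1 : ℤ) * (-this)

lemma cross01 (h g : ℕ → ℤ) (hh : ∀ j, h j = 0 ∨ h j = 1) (hg : ∀ j, g j = 0 ∨ g j = 1) (n m : ℕ) :
    ∑ p ∈ Icc 1 n, ∑ s ∈ Icc 1 m, |h p - g s| =
      m * (∑ j ∈ Icc 1 n, h j) + n * (∑ j ∈ Icc 1 m, g j)
        - 2 * (∑ j ∈ Icc 1 n, h j) * (∑ j ∈ Icc 1 m, g j) := by
  rw [Finset.sum_congr rfl fun p _ => Finset.sum_congr rfl fun s _ => abs01 (hh p) (hg s)]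
  simp only [Finset.sum_sub_distrib, Finset.sum_add_distrib, ← Finset.sum_mul, ← Finset.mul_sum,
      Finset.sum_const, Nat.card_Icc, Nat.add_sub_cancel, nsmul_eq_mul]

lemma tele (f : ℕ → ℤ) (M : ℕ) :
    ∑ n ∈ Icc 1 (M+1), ((n + 1 : ℤ) * f n + n * f (n + 1) - 2 * f n * f (n + 1)) -
      2 * ∑ n ∈ Icc 2 (M+1), f n * (n - f n) =
    ∑ n ∈ Icc 1 (M+1), (f (n + 1) - f n) * (f (n + 1) - f n - 1)
      + f 1 * (1 - f 1) + f (M + 2) * (M + 2 - f (M + 2)) := by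
  induction M with
  | zero => simp; ring
  | succ M ih =>
    rw [Finset.sum_Icc_succ_top (by omega), Finset.sum_Icc_succ_top (b := M + 1) (by omega),
      Finset.sum_Icc_succ_top (b := M + 1) (by omega)]
    push_cast
    linear_combination ih

lemma dd_nonneg (d : ℤ) : 0 ≤ d * (d - 1) := by
  rcases le_or_gt d 0 with h | h <;> nlinarith

lemma step_bound (f : ℕ → ℤ) (k l : ℕ) (hd : ∀ n, k ≤ n → n < k + l →
    0 ≤ f (n + 1) - f n ∧ f (n + 1) - f n ≤ 1) : 0 ≤ f (k + l) - f k ∧ f (k + l) - f k ≤ l := by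
  induction l with
  | zero => simp
  | succ l ih =>
    have := ih fun n h1 h2 => hd n h1 (by omega)
    have := hd (k + l) (by omega) (by omega)
    push_cast
    rw [← add_assoc]
    constructor <;> linarith

lemma sum01 (h : ℕ → ℤ) (hh : ∀ j, h j = 0 ∨ h j = 1) (n j : ℕ) (h1 : 1 ≤ j) (h2 : j ≤ n) :
    h j ≤ ∑ i ∈ Icc 1 n, h i ∧ ∑ i ∈ Icc 1 n, h i ≤ n - 1 + h j := by
  have hm : j ∈ Icc 1 n := by simp; omega
  rw [← Finset.add_sum_erase _ _ hm]
  have a1 : 0 ≤ ∑ i ∈ (Icc 1 n).erase j, h i :=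
    Finset.sum_nonneg fun i _ => by rcases hh i with e | e <;> simp [e]
  have a2 : ∑ i ∈ (Icc 1 n).erase j, h i ≤ ∑ i ∈ (Icc 1 n).erase j, 1 :=
    Finset.sum_le_sum fun i _ => by rcases hh i with e | e <;> simp [e]
  rw [Finset.sum_const, Finset.card_erase_of_mem hm] at a2
  simp at a2
  rw [Nat.cast_sub (by omega)] at a2
  push_cast at a2
  constructor <;> linarith

lemma cut (M : ℕ) (h : ℕ → ℕ → ℤ) (hh : ∀ n j, h n j = 0 ∨ h n j = 1) (h0 : ℤ)
    (htop : ∀ j, h (M + 2) j = h0) (k j : ℕ) (hj : 1 ≤ j) (hjk : j ≤ k) (hk : k ≤ M + 1) :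
    2 * |h k j - h0| ≤
     ∑ n ∈ Icc 1 (M+1), ∑ k ∈ Icc 1 n, ∑ m ∈ Icc 1 (n + 1), |h n k - h (n + 1) m| -
      2 * ∑ n ∈ Icc 2 (M+1), ∑ p ∈ Icc 1 n, ∑ s ∈ Ico 1 p, |h n s - h n p| := by
  set f : ℕ → ℤ := fun n => ∑ j ∈ Icc 1 n, h n j with hf
  have e1 : ∀ n, ∑ k ∈ Icc 1 n, ∑ m ∈ Icc 1 (n + 1), |h n k - h (n + 1) m| =
      ((n + 1 : ℤ) * f n + n * f (n + 1) - 2 * f n * f (n + 1)) := fun n => by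
    rw [cross01 _ _ (hh n) (hh (n + 1))]; push_cast; rfl
  have e2 : ∀ n, ∑ p ∈ Icc 1 n, ∑ s ∈ Ico 1 p, |h n s - h n p| = f n * (n - f n) :=
    fun n => pairs01 _ (hh n) n
  simp only [e1, e2]
  rw [tele]
  have hh0 : h0 = 0 ∨ h0 = 1 := by rw [← htop 0]; exact hh _ _
  have f1 : f 1 * (1 - f 1) = 0 := by
    simp only [hf, Icc_self, sum_singleton]
    rcases hh 1 1 with e | e <;> simp [e]
  have fN : f (M + 2) = (M + 2) * h0 := by simp [hf, htop]
  have fN' : f (M + 2) * (M + 2 - f (M + 2)) = 0 := by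
    rw [fN]; rcases hh0 with e | e <;> simp [e]
  rw [f1, fN', add_zero, add_zero]
  have nn : ∀ n ∈ Icc 1 (M + 1), 0 ≤ (f (n + 1) - f n) * (f (n + 1) - f n - 1) :=
    fun n _ => dd_nonneg _
  by_cases hd : ∀ n, k ≤ n → n < k + (M + 2 - k) → 0 ≤ f (n + 1) - f n ∧ f (n + 1) - f n ≤ 1
  · have b := step_bound f k (M + 2 - k) hd
    rw [show k + (M + 2 - k) = M + 2 by omega, fN, Nat.cast_sub (by omega)] at b
    push_cast at b
    have c := sum01 (h k) (hh k) k j hj hjk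
    change _ ≤ f k ∧ f k ≤ _ at c
    have : h k j = h0 := by
      rcases hh0 with rfl | rfl <;> rcases hh k j with e | e <;> rw [e] at c ⊢ <;> exfalso <;> linarith
    rw [this]; simpa using Finset.sum_nonneg nn
  · push Not at hd
    obtain ⟨n, n1, n2, hd⟩ := hd
    have hn : n ∈ Icc 1 (M + 1) := by simp; omega
    refine le_trans ?_ (Finset.single_le_sum nn hn)
    have : |h k j - h0| ≤ 1 := by
      rcases hh0 with e | e <;> rcases hh k j with e' | e' <;> simp [e, e']
    set d := f (n + 1) - f n
    have : 2 ≤ d * (d - 1) := by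
      rcases lt_or_ge d 0 with g | g
      · nlinarith
      · have := hd g
        nlinarith
    linarith

lemma core (M : ℕ) (y : ℕ → ℕ → ℝ) (htop : ∀ j, y (M + 2) j = 0)
    (k j : ℕ) (hj : 1 ≤ j) (hjk : j ≤ k) (hk : k ≤ M + 1) :
    2 * |y k j| ≤
     ∑ n ∈ Icc 1 (M+1), ∑ k ∈ Icc 1 n, ∑ m ∈ Icc 1 (n + 1), |y n k - y (n + 1) m| -
      2 * ∑ n ∈ Icc 2 (M+1), ∑ p ∈ Icc 1 n, ∑ s ∈ Ico 1 p, |y n s - y n p| := by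
  have A := QInt.sum (Icc 1 (M+1)) _ _ fun n _ => QInt.sum (Icc 1 n) _ _ fun k _ =>
    QInt.sum (Icc 1 (n + 1)) _ _ fun m _ => QInt.base (y n k) (y (n + 1) m)
  have B := QInt.sum (Icc 2 (M+1)) _ _ fun n _ => QInt.sum (Icc 1 n) _ _ fun p _ =>
    QInt.sum (Ico 1 p) _ _ fun s _ => QInt.base (y n s) (y n p)
  have C := (QInt.base (y k j) 0).const_mul 2
  have D := A.sub (B.const_mul 2)
  have := integral_mono C.1 D.1 fun t => by
    have := cut M (fun n j => hv t (y n j)) (fun n j => hv_cases _ _) (hv t 0)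
      (fun j => by simp [htop]) k j hj hjk hk
    dsimp only
    exact_mod_cast this
  rw [C.2, D.2] at this
  simpa using this

/-! ### Gamma bound -/

lemma gamma_bound (y : ℝ) : ‖Complex.Gamma (1 / 2 + y * Complex.I)‖ ≤
    Real.sqrt (2 * Real.pi) * Real.exp (-(Real.pi * |y| / 2)) := by
  have h := Complex.Gamma_mul_Gamma_one_sub (1 / 2 + y * Complex.I)
  have e : (1 : ℂ) - (1 / 2 + y * Complex.I) = (starRingEnd ℂ) (1 / 2 + y * Complex.I) := by
    apply Complex.ext <;> simp <;> norm_num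
  have s : Complex.sin (Real.pi * (1 / 2 + y * Complex.I)) = (Real.cosh (Real.pi * y) : ℝ) := by
    rw [show (Real.pi * (1 / 2 + y * Complex.I) : ℂ) = ((Real.pi * y : ℝ) : ℂ) * Complex.I + Real.pi / 2 by
      push_cast; ring, Complex.sin_add_pi_div_two, Complex.cos_mul_I, Complex.ofReal_cosh]
  rw [e, Complex.Gamma_conj, Complex.mul_conj, s, Complex.normSq_eq_norm_sq] at h
  have h' : ‖Complex.Gamma (1 / 2 + y * Complex.I)‖ ^ 2 = Real.pi / Real.cosh (Real.pi * y) := by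
    exact_mod_cast h
  refine le_of_sq_le_sq ?_ (by positivity)
  rw [h', mul_pow, Real.sq_sqrt (by positivity), ← Real.exp_nat_mul]
  rw [div_le_iff₀ (Real.cosh_pos _), ← Real.cosh_abs, abs_mul, abs_of_pos Real.pi_pos, Real.cosh_eq]
  have : Real.exp ((2 : ℕ) * -(Real.pi * |y| / 2)) * Real.exp (Real.pi * |y|) = 1 := by
    rw [← Real.exp_add]; simp; ring
  have p := Real.exp_pos ((2 : ℕ) * -(Real.pi * |y| / 2))
  have p' := Real.exp_pos (-(Real.pi * |y|))
  have pp := Real.pi_pos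
  have : 2 * Real.pi * Real.exp ((2 : ℕ) * -(Real.pi * |y| / 2)) *
    ((Real.exp (Real.pi * |y|) + Real.exp (-(Real.pi * |y|))) / 2) = Real.pi * 1 + Real.pi *
      (Real.exp ((2 : ℕ) * -(Real.pi * |y| / 2)) * Real.exp (-(Real.pi * |y|))) := by
    rw [← this]; ring
  rw [this]
  have := mul_pos pp (mul_pos p p')
  linarith

lemma arg_eq (ℏ a b : ℝ) : ((a : ℂ) - b) / (Complex.I * ℏ) + 1 / 2 =
    1 / 2 + ((-((a - b) / ℏ) : ℝ) : ℂ) * Complex.I := by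
  rw [mul_comm Complex.I, ← div_div, Complex.div_I]; push_cast; ring

lemma factor_bound (ℏ : ℝ) (hℏ : 0 < ℏ) (a b : ℝ) :
    ‖hpow ℏ (((a : ℂ) - b) / (Complex.I * ℏ) + 1 / 2) *
      Complex.Gamma (((a : ℂ) - b) / (Complex.I * ℏ) + 1 / 2)‖ ≤
    Real.exp (1 / 2 * Real.log ℏ) * Real.sqrt (2 * Real.pi) *
      Real.exp (-(Real.pi / ℏ / 2 * |a - b|)) := by
  rw [arg_eq, norm_mul, mul_assoc]
  have h1 : ‖hpow ℏ (1 / 2 + ((-((a - b) / ℏ) : ℝ) : ℂ) * Complex.I)‖ = Real.exp (1 / 2 * Real.log ℏ) := by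
    rw [hpow, Complex.norm_exp]; congr 1; simp
  rw [h1]
  refine mul_le_mul_of_nonneg_left ((gamma_bound _).trans_eq ?_) (by positivity)
  rw [abs_neg, abs_div, abs_of_pos hℏ]; congr 2; ring

lemma exp_diff_bound (c p s : ℝ) (hc : 0 < c) :
    ‖Complex.exp (((2 * c : ℝ) : ℂ) * (p : ℂ)) - Complex.exp (((2 * c : ℝ) : ℂ) * (s : ℂ))‖ ≤
      Real.exp (c * (p + s) + c * |s - p|) := by
  have : Complex.exp (((2 * c : ℝ) : ℂ) * (p : ℂ)) - Complex.exp (((2 * c : ℝ) : ℂ) * (s : ℂ)) =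
    ((Real.exp (2 * c * p) - Real.exp (2 * c * s) : ℝ) : ℂ) := by push_cast; rfl
  rw [this, Complex.norm_real, Real.norm_eq_abs, abs_le]
  have h1 := le_abs_self (s - p)
  have h2 := neg_abs_le (s - p)
  have e1 : Real.exp (2 * c * p) ≤ Real.exp (c * (p + s) + c * |s - p|) :=
    Real.exp_le_exp.2 (by nlinarith)
  have e2 : Real.exp (2 * c * s) ≤ Real.exp (c * (p + s) + c * |s - p|) :=
    Real.exp_le_exp.2 (by nlinarith)
  have := Real.exp_pos (2 * c * p)
  have := Real.exp_pos (2 * c * s)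
  constructor <;> linarith

lemma pair_sum (x : ℕ → ℝ) (n : ℕ) :
    ∑ p ∈ Icc 1 n, ∑ s ∈ Ico 1 p, (x p + x s) = (n - 1) * ∑ j ∈ Icc 1 n, x j := by
  induction n with
  | zero => simp
  | succ n ih =>
    rw [Finset.sum_Icc_succ_top (by omega), ih, Finset.sum_Icc_succ_top (by omega)]
    have e : Ico 1 (n + 1) = Icc 1 n := by ext; simp
    rw [e, Finset.sum_add_distrib]
    simp
    ring

/-! ### Subexponential functions -/

def SubExp {ι : Type*} [Fintype ι] (F : (ι → ℝ) → ℂ) : Prop :=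
  ∀ ε > 0, ∃ C : ℝ, 0 ≤ C ∧ ∀ ξ, ‖F ξ‖ ≤ C * Real.exp (ε * ∑ p, |ξ p|)

section
variable {ι : Type*} [Fintype ι]

lemma SubExp.const (c : ℂ) : SubExp (fun _ : ι → ℝ => c) := fun ε hε =>
  ⟨‖c‖, norm_nonneg _, fun ξ => le_mul_of_one_le_right (norm_nonneg _)
    (Real.one_le_exp (mul_nonneg hε.le (Finset.sum_nonneg fun _ _ => abs_nonneg _)))⟩

lemma SubExp.mul {F G : (ι → ℝ) → ℂ} (hF : SubExp F) (hG : SubExp G) :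
    SubExp (fun ξ => F ξ * G ξ) := fun ε hε => by
  obtain ⟨C, hC, h⟩ := hF (ε / 2) (by linarith)
  obtain ⟨D, hD, h'⟩ := hG (ε / 2) (by linarith)
  refine ⟨C * D, mul_nonneg hC hD, fun ξ => ?_⟩
  rw [norm_mul]
  refine (mul_le_mul (h ξ) (h' ξ) (norm_nonneg _) (by positivity)).trans_eq ?_
  rw [mul_mul_mul_comm, ← Real.exp_add]; congr 2; ring

lemma SubExp.add {F G : (ι → ℝ) → ℂ} (hF : SubExp F) (hG : SubExp G) :
    SubExp (fun ξ => F ξ + G ξ) := fun ε hε => by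
  obtain ⟨C, hC, h⟩ := hF ε hε
  obtain ⟨D, hD, h'⟩ := hG ε hε
  refine ⟨C + D, add_nonneg hC hD, fun ξ => ?_⟩
  rw [add_mul]
  exact (norm_add_le _ _).trans (add_le_add (h ξ) (h' ξ))

lemma SubExp.coord (i : ι) : SubExp (fun ξ : ι → ℝ => ((ξ i : ℝ) : ℂ)) := fun ε hε => by
  refine ⟨1 / ε, by positivity, fun ξ => ?_⟩
  rw [Complex.norm_real, Real.norm_eq_abs, div_mul_eq_mul_div, le_div_iff₀ hε, one_mul]
  have h1 : |ξ i| ≤ ∑ p, |ξ p| :=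
    Finset.single_le_sum (f := fun p => |ξ p|) (fun _ _ => abs_nonneg _) (Finset.mem_univ i)
  have := Real.add_one_le_exp (ε * ∑ p, |ξ p|)
  nlinarith

lemma SubExp.prod {α : Type*} (s : Finset α) (F : α → (ι → ℝ) → ℂ)
    (h : ∀ a ∈ s, SubExp (F a)) : SubExp (fun ξ => ∏ a ∈ s, F a ξ) := by
  classical
  induction s using Finset.induction_on with
  | empty => simpa using SubExp.const 1
  | insert a s ha ih =>
    simp only [Finset.prod_insert ha]
    exact (h a (by simp)).mul (ih fun b hb => h b (by simp [hb]))

lemma SubExp.star {F : (ι → ℝ) → ℂ} (hF : SubExp F) : SubExp (fun ξ => (starRingEnd ℂ) (F ξ)) := by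
  intro ε hε
  simpa using hF ε hε

lemma SubExp.poly (q : MvPolynomial ι ℂ) :
    SubExp (fun ξ : ι → ℝ => MvPolynomial.eval (fun p => ((ξ p : ℝ) : ℂ)) q) := by
  induction q using MvPolynomial.induction_on with
  | C a => simpa using SubExp.const a
  | add p q hp hq => simpa using hp.add hq
  | mul_X p i hp => simpa using hp.mul (SubExp.coord i)

lemma exp_abs_integrable (c : ℝ) (hc : 0 < c) : Integrable (fun t : ℝ => Real.exp (-(c * |t|))) := by
  have h1 : IntegrableOn (fun t : ℝ => Real.exp (-(c * |t|))) (Set.Ioi 0) :=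
    (integrableOn_exp_mul_Ioi (neg_lt_zero.2 hc) 0).congr_fun
      (fun t (ht : 0 < t) => by simp [abs_of_pos ht]) measurableSet_Ioi
  have h2 : IntegrableOn (fun t : ℝ => Real.exp (-(c * |t|))) (Set.Iic 0) :=
    (integrableOn_exp_mul_Iic hc 0).congr_fun
      (fun t (ht : t ≤ 0) => by simp [abs_of_nonpos ht]) measurableSet_Iic
  have := h2.union h1
  rwa [Set.Iic_union_Ioi, integrableOn_univ] at this

lemma exp_sum_integrable (c : ℝ) (hc : 0 < c) :
    Integrable (fun ξ : ι → ℝ => Real.exp (-(c * ∑ p, |ξ p|))) := by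
  have := Integrable.fintype_prod (ι := ι) (μ := fun _ => (volume : Measure ℝ)) (f := fun _ t => Real.exp (-(c * |t|)))
    fun _ => exp_abs_integrable c hc
  simpa [← Real.exp_sum, Finset.mul_sum, volume_pi] using this
end

def rr (N : ℕ) (g : ℕ → ℝ) (ξ : GZIdx N → ℝ) (n j : ℕ) : ℝ :=
  if h : 1 ≤ j ∧ j ≤ n ∧ n < N then
    ξ ⟨(⟨n, h.2.2⟩, ⟨j, lt_of_le_of_lt h.2.1 h.2.2⟩), h.1, h.2.1⟩
  else g j

lemma gzOf_eq (N : ℕ) (g : ℕ → ℝ) (ξ : GZIdx N → ℝ) (n j : ℕ) :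
    gzOf N (fun j => (g j : ℂ)) ξ n j = (rr N g ξ n j : ℂ) := by
  unfold gzOf rr; split_ifs <;> rfl

lemma rr_cont (N : ℕ) (g : ℕ → ℝ) (n j : ℕ) : Continuous (fun ξ => rr N g ξ n j) := by
  unfold rr; split_ifs <;> fun_prop

lemma rr_sub (N : ℕ) (g : ℕ → ℝ) (n j : ℕ) : SubExp (fun ξ => (rr N g ξ n j : ℂ)) := by
  unfold rr
  split_ifs
  · exact SubExp.coord _
  · exact SubExp.const _

lemma cont_mu0 (ℏ : ℝ) (N : ℕ) (g : ℕ → ℝ) :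
    Continuous (fun ξ => mu0 ℏ N (gzOf N (fun j => (g j : ℂ)) ξ)) := by
  simp only [mu0, gzOf_eq]
  have := rr_cont N g
  fun_prop

lemma cont_w (ℏ : ℝ) (N : ℕ) (g : ℕ → ℝ) :
    Continuous (fun ξ => wWhit ℏ N (gzOf N (fun j => (g j : ℂ)) ξ)) := by
  simp only [wWhit, sW, hpow, gzOf_eq, arg_eq]
  have := rr_cont N g
  have hG : ∀ n k m, Continuous (fun ξ => Complex.Gamma
      (1 / 2 + ((-((rr N g ξ n k - rr N g ξ (n + 1) m) / ℏ) : ℝ) : ℂ) * Complex.I)) := by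
    intro n k m
    refine continuous_iff_continuousAt.2 fun ξ => ?_
    refine ContinuousAt.comp (f := fun ξ => (1 / 2 + ((-((rr N g ξ n k - rr N g ξ (n + 1) m) / ℏ) : ℝ) : ℂ) * Complex.I)) ?_ (by fun_prop)
    refine (Complex.differentiableAt_Gamma _ fun q hq => ?_).continuousAt
    have := congrArg Complex.re hq
    simp at this
    have : (0 : ℝ) ≤ q := by positivity
    linarith
  fun_prop

/-- top row collapsed to zero -/
def yy (N : ℕ) (g : ℕ → ℝ) (ξ : GZIdx N → ℝ) (n j : ℕ) : ℝ :=
  if n < N then rr N g ξ n j else 0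

lemma yy_diff (N : ℕ) (g : ℕ → ℝ) (ξ : GZIdx N → ℝ) (n k m : ℕ) (hn : n < N)
    (hm : m ∈ Icc 1 N) :
    |yy N g ξ n k - yy N g ξ (n + 1) m| - ∑ j ∈ Icc 1 N, |g j| ≤
      |rr N g ξ n k - rr N g ξ (n + 1) m| := by
  have hT : |g m| ≤ ∑ j ∈ Icc 1 N, |g j| :=
    Finset.single_le_sum (f := fun j => |g j|) (fun _ _ => abs_nonneg _) hm
  have := abs_nonneg (g m)
  unfold yy
  rw [if_pos hn]
  by_cases h : n + 1 < N
  · rw [if_pos h]; linarith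
  · rw [if_neg h]
    have : rr N g ξ (n + 1) m = g m := by
      unfold rr; rw [dif_neg]; tauto
    rw [this, sub_zero]
    have := abs_sub_abs_le_abs_sub (rr N g ξ n k) (g m)
    linarith

lemma w_bound (ℏ : ℝ) (hℏ : 0 < ℏ) (N : ℕ) (g : ℕ → ℝ) : ∃ C : ℝ, 0 ≤ C ∧ ∀ ξ,
    ‖wWhit ℏ N (gzOf N (fun j => (g j : ℂ)) ξ)‖ ≤
      C * Real.exp (-(Real.pi / ℏ * ∑ n ∈ Icc 1 (N - 1), ((n : ℝ) - 1) * ∑ j ∈ Icc 1 n, rr N g ξ n j)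
        - Real.pi / ℏ / 2 * ∑ n ∈ Icc 1 (N - 1), ∑ k ∈ Icc 1 n, ∑ m ∈ Icc 1 (n + 1),
          |yy N g ξ n k - yy N g ξ (n + 1) m|) := by
  set c := Real.pi / ℏ with hc
  have cpos : 0 < c := div_pos Real.pi_pos hℏ
  set K : ℝ := Real.exp (1 / 2 * Real.log ℏ) * Real.sqrt (2 * Real.pi) *
    Real.exp (c / 2 * ∑ j ∈ Icc 1 N, |g j|) with hK
  refine ⟨∏ n ∈ Icc 1 (N - 1), ∏ k ∈ Icc 1 n, ∏ m ∈ Icc 1 (n + 1), K, ?_, fun ξ => ?_⟩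
  · exact Finset.prod_nonneg fun _ _ => Finset.prod_nonneg fun _ _ => Finset.prod_nonneg fun _ _ =>
      by positivity
  have e1 : ‖Complex.exp (-((c : ℝ) : ℂ) * ∑ n ∈ Icc 1 (N - 1), ((n : ℂ) - 1) *
      ∑ j ∈ Icc 1 n, gzOf N (fun j => (g j : ℂ)) ξ n j)‖ =
      Real.exp (-(c * ∑ n ∈ Icc 1 (N - 1), ((n : ℝ) - 1) * ∑ j ∈ Icc 1 n, rr N g ξ n j)) := by
    rw [← Real.norm_of_nonneg (Real.exp_pos _).le, ← Complex.norm_real]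
    simp only [gzOf_eq]
    push_cast
    congr 2
    ring
  rw [wWhit, norm_mul, e1, sub_eq_add_neg, Real.exp_add, mul_left_comm]
  refine mul_le_mul_of_nonneg_left ?_ (Real.exp_pos _).le
  rw [norm_prod, Finset.mul_sum, ← Finset.sum_neg_distrib, Real.exp_sum, ← Finset.prod_mul_distrib]
  refine Finset.prod_le_prod (fun _ _ => norm_nonneg _) fun n hn => ?_
  rw [sW, norm_prod, Finset.mul_sum, ← Finset.sum_neg_distrib, Real.exp_sum, ← Finset.prod_mul_distrib]
  refine Finset.prod_le_prod (fun _ _ => norm_nonneg _) fun k hk => ?_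
  rw [norm_prod, Finset.mul_sum, ← Finset.sum_neg_distrib, Real.exp_sum, ← Finset.prod_mul_distrib]
  refine Finset.prod_le_prod (fun _ _ => norm_nonneg _) fun m hm => ?_
  rw [gzOf_eq, gzOf_eq]
  refine (factor_bound ℏ hℏ _ _).trans ?_
  rw [hK, mul_assoc _ (Real.exp (c / 2 * _)), ← Real.exp_add]
  refine mul_le_mul_of_nonneg_left (Real.exp_le_exp.2 ?_) (by positivity)
  simp only [Finset.mem_Icc] at hn hm
  have := yy_diff N g ξ n k m (by omega) (by simp; omega)
  rw [← hc]
  nlinarith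

def vand (N : ℕ) (g : ℕ → ℝ) (ξ : GZIdx N → ℝ) : ℂ :=
  ∏ n ∈ Icc 2 (N - 1), ∏ p ∈ Icc 1 n, ∏ s ∈ Ico 1 p, ((rr N g ξ n s : ℂ) + (-1) * (rr N g ξ n p : ℂ))

lemma vand_sub (N : ℕ) (g : ℕ → ℝ) : SubExp (vand N g) := by
  unfold vand
  exact SubExp.prod _ _ fun n _ => SubExp.prod _ _ fun p _ => SubExp.prod _ _ fun s _ =>
    (rr_sub N g n s).add ((SubExp.const (-1)).mul (rr_sub N g n p))

lemma mu_bound (ℏ : ℝ) (hℏ : 0 < ℏ) (N : ℕ) (g : ℕ → ℝ) (ξ : GZIdx N → ℝ) :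
    ‖mu0 ℏ N (gzOf N (fun j => (g j : ℂ)) ξ)‖ ≤ ‖vand N g ξ‖ *
      Real.exp (Real.pi / ℏ * ∑ n ∈ Icc 2 (N - 1), ((n : ℝ) - 1) * ∑ j ∈ Icc 1 n, rr N g ξ n j
        + Real.pi / ℏ * ∑ n ∈ Icc 2 (N - 1), ∑ p ∈ Icc 1 n, ∑ s ∈ Ico 1 p,
          |yy N g ξ n s - yy N g ξ n p|) := by
  set c := Real.pi / ℏ with hc
  have cpos : 0 < c := div_pos Real.pi_pos hℏ
  simp only [← pair_sum]
  rw [← mul_add, ← Finset.sum_add_distrib]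
  simp only [← Finset.sum_add_distrib]
  simp only [mu0, vand, norm_prod, Finset.mul_sum, Real.exp_sum, ← Finset.prod_mul_distrib]
  refine Finset.prod_le_prod (fun _ _ => by positivity) fun n hn => ?_
  refine Finset.prod_le_prod (fun _ _ => by positivity) fun p hp => ?_
  refine Finset.prod_le_prod (fun _ _ => by positivity) fun s hs => ?_
  simp only [gzOf_eq, norm_mul]
  simp only [Finset.mem_Icc] at hn
  have hy : ∀ j, yy N g ξ n j = rr N g ξ n j := fun j => by
    unfold yy; rw [if_pos (by omega)]
  rw [hy, hy, neg_one_mul, ← sub_eq_add_neg]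
  refine mul_le_mul_of_nonneg_left ?_ (norm_nonneg _)
  have := exp_diff_bound c (rr N g ξ n p) (rr N g ξ n s) cpos
  rw [show 2 * Real.pi / ℏ = 2 * c by rw [hc]; ring, mul_add]
  exact this

lemma core_idx (N : ℕ) (hN : 2 ≤ N) (g : ℕ → ℝ) (ξ : GZIdx N → ℝ) (i : GZIdx N) :
    2 * |ξ i| ≤ ∑ n ∈ Icc 1 (N - 1), ∑ k ∈ Icc 1 n, ∑ m ∈ Icc 1 (n + 1),
        |yy N g ξ n k - yy N g ξ (n + 1) m| -
      2 * ∑ n ∈ Icc 2 (N - 1), ∑ p ∈ Icc 1 n, ∑ s ∈ Ico 1 p, |yy N g ξ n s - yy N g ξ n p| := by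
  obtain ⟨⟨k, j⟩, h1, h2⟩ := i
  obtain ⟨M, rfl⟩ : ∃ M, N = M + 2 := ⟨N - 2, by omega⟩
  have := core M (yy (M + 2) g ξ) (fun j => by simp [yy]) k j h1 h2 (by have := k.2; omega)
  have e : yy (M + 2) g ξ k j = ξ ⟨(k, j), h1, h2⟩ := by
    unfold yy rr
    rw [if_pos k.2, dif_pos ⟨h1, h2, k.2⟩]
  rw [e] at this
  exact this

/-- absolute convergence of the pairing integral
`⟨q_1, q_2 w_N⟩ = ∫ μ_0(γ)·conj(q_1(γ))·q_2(γ)·w_N(γ) dγ` for polynomials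
`q_1, q_2` in the Gelfand–Zetlin variables, with real top row `γ_{N·}`. -/
theorem pairing_integral_convergence (ℏ : ℝ) (hℏ : 0 < ℏ) (N : ℕ) (hN : 2 ≤ N)
    (γtop : ℕ → ℝ) (q₁ q₂ : MvPolynomial (GZIdx N) ℂ) :
    Integrable (fun ξ : GZIdx N → ℝ =>
      mu0 ℏ N (gzOf N (fun j => (γtop j : ℂ)) ξ) *
        (starRingEnd ℂ) (MvPolynomial.eval (fun p => ((ξ p : ℝ) : ℂ)) q₁) *
        MvPolynomial.eval (fun p => ((ξ p : ℝ) : ℂ)) q₂ *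
        wWhit ℏ N (gzOf N (fun j => (γtop j : ℂ)) ξ)) := by
  have cpos : 0 < Real.pi / ℏ := div_pos Real.pi_pos hℏ
  obtain ⟨C, hC, hw⟩ := w_bound ℏ hℏ N γtop
  have hcard : 0 < (Fintype.card (GZIdx N) : ℝ) := by
    have : Nonempty (GZIdx N) := ⟨⟨(⟨1, hN⟩, ⟨1, hN⟩), le_rfl, le_rfl⟩⟩
    exact_mod_cast Fintype.card_pos
  set c := Real.pi / ℏ with hc
  set d := c / Fintype.card (GZIdx N) with hd
  have dpos : 0 < d := div_pos cpos hcard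
  obtain ⟨D, hD, hs⟩ := ((vand_sub N γtop).mul ((SubExp.poly q₁).star.mul (SubExp.poly q₂)))
    (d / 2) (by linarith)
  have hpoly : ∀ q : MvPolynomial (GZIdx N) ℂ,
      Continuous (fun ξ : GZIdx N → ℝ => MvPolynomial.eval (fun p => ((ξ p : ℝ) : ℂ)) q) := fun q =>
    (MvPolynomial.continuous_eval q).comp (by fun_prop)
  refine Integrable.mono' ((exp_sum_integrable (ι := GZIdx N) (d / 2) (by linarith)).const_mul
    (D * C)) ?_ (Filter.Eventually.of_forall fun ξ => ?_)
  · refine Continuous.aestronglyMeasurable ?_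
    exact (((cont_mu0 ℏ N γtop).mul (Complex.continuous_conj.comp (hpoly q₁))).mul (hpoly q₂)).mul
      (cont_w ℏ N γtop)
  have hw := hw ξ
  have hs := hs ξ
  have hm := mu_bound ℏ hℏ N γtop ξ
  have hcore := Finset.sum_le_sum fun i (_ : i ∈ Finset.univ) => core_idx N hN γtop ξ i
  rw [Finset.sum_const, ← Finset.mul_sum, Finset.card_univ, nsmul_eq_mul] at hcore
  rw [← hc] at hm
  have e12 : ∑ n ∈ Icc 1 (N - 1), ((n : ℝ) - 1) * ∑ j ∈ Icc 1 n, rr N γtop ξ n j =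
      ∑ n ∈ Icc 2 (N - 1), ((n : ℝ) - 1) * ∑ j ∈ Icc 1 n, rr N γtop ξ n j := by
    symm
    refine Finset.sum_subset (fun n => by simp; omega) fun n h1 h2 => ?_
    have : n = 1 := by simp at h1 h2; omega
    simp [this]
  rw [e12] at hw
  set S := ∑ n ∈ Icc 2 (N - 1), ((n : ℝ) - 1) * ∑ j ∈ Icc 1 n, rr N γtop ξ n j
  set A := ∑ n ∈ Icc 1 (N - 1), ∑ k ∈ Icc 1 n, ∑ m ∈ Icc 1 (n + 1),
        |yy N γtop ξ n k - yy N γtop ξ (n + 1) m|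
  set B := ∑ n ∈ Icc 2 (N - 1), ∑ p ∈ Icc 1 n, ∑ s ∈ Ico 1 p,
        |yy N γtop ξ n s - yy N γtop ξ n p|
  set X := ∑ p, |ξ p|
  have hX : d * X ≤ c / 2 * A - c * B := by
    rw [hd, div_mul_eq_mul_div, div_le_iff₀ hcard]
    nlinarith
  rw [norm_mul, norm_mul, norm_mul]
  rw [norm_mul, norm_mul] at hs
  set Q1 := ‖(starRingEnd ℂ) (MvPolynomial.eval (fun p => ((ξ p : ℝ) : ℂ)) q₁)‖
  set Q2 := ‖MvPolynomial.eval (fun p => ((ξ p : ℝ) : ℂ)) q₂‖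
  have q1 : 0 ≤ Q1 := norm_nonneg _
  have q2 : 0 ≤ Q2 := norm_nonneg _
  calc _ ≤ (‖vand N γtop ξ‖ * Real.exp (c * S + c * B)) * Q1 * Q2 *
        (C * Real.exp (-(c * S) - c / 2 * A)) := by gcongr
    _ = (‖vand N γtop ξ‖ * (Q1 * Q2)) * (C * (Real.exp (c * S + c * B) *
          Real.exp (-(c * S) - c / 2 * A))) := by ring
    _ ≤ (D * Real.exp (d / 2 * X)) * (C * Real.exp (- (d * X))) := by
        rw [← Real.exp_add]
        gcongr
        linarith
    _ = D * C * (Real.exp (d / 2 * X) * Real.exp (- (d * X))) := by ring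
    _ = _ := by rw [← Real.exp_add]; congr 2; ring
end
end

section
/- Fix ℏ > 0 and n ≥ 1. For every function f, all λ, μ ∈ ℂ, and every point γ at which γ_{n1},…,γ_{nn} are pairwise distinct, the following Yangian-type relations hold pointwise: (λ − μ + iℏ)·(𝒜_n(λ)(ℬ_n(μ)f))(γ) = (λ − μ)·(ℬ_n(μ)(𝒜_n(λ)f))(γ) + iℏ·(𝒜_n(μ)(ℬ_n(λ)f))(γ), and (λ − μ + iℏ)·(𝒜_n(μ)(𝒞_n(λ)f))(γ) = (λ − μ)·(𝒞_n(λ)(𝒜_n(μ)f))(γ) + iℏ·(𝒜_n(λ)(𝒞_n(μ)f))(γ). -/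
open Finset

noncomputable section

/-- The row of Gelfand–Zetlin variables `γ_n = (γ_{n1}, …, γ_{nn})` (indexed by `ℕ`,
relevant for indices `1, …, n`). -/
abbrev Row := ℕ → ℂ

/-- Shift of the single variable `γ_{nj}` by `c`. -/
def rowShift (c : ℂ) (j : ℕ) (g : Row) : Row := fun k => if k = j then g k + c else g k

/-- The operator `𝒜_n(λ)`: multiplication by `∏_{j=1}^{n}(λ − γ_{nj})`. -/
def Aop (n : ℕ) (lam : ℂ) (f : Row → ℂ) (g : Row) : ℂ :=
  (∏ j ∈ Icc 1 n, (lam - g j)) * f g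

/-- The operator `ℬ_n(λ)`, with fixed parameters `t = γ_{n+1}`. -/
def Bop (ℏ : ℝ) (n : ℕ) (t : Row) (lam : ℂ) (f : Row → ℂ) (g : Row) : ℂ :=
  ∑ j ∈ Icc 1 n,
    (∏ s ∈ (Icc 1 n).erase j, (lam - g s) / (g j - g s)) *
      (∏ r ∈ Icc 1 (n + 1), (g j - t r - Complex.I * ℏ / 2)) *
      f (rowShift (-(Complex.I * ℏ)) j g)

/-- The operator `𝒞_n(λ)`, with fixed parameters `u = γ_{n−1}`. -/
def Cop (ℏ : ℝ) (n : ℕ) (u : Row) (lam : ℂ) (f : Row → ℂ) (g : Row) : ℂ :=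
  -∑ j ∈ Icc 1 n,
    (∏ s ∈ (Icc 1 n).erase j, (lam - g s) / (g j - g s)) *
      (∏ r ∈ Icc 1 (n - 1), (g j - u r + Complex.I * ℏ / 2)) *
      f (rowShift (Complex.I * ℏ) j g)

lemma prod_rowShift_aux (n j : ℕ) (hj : j ∈ Icc 1 n) (c x : ℂ) (g : Row) :
    (∏ k ∈ Icc 1 n, (x - rowShift c j g k)) =
      (x - g j - c) * ∏ k ∈ (Icc 1 n).erase j, (x - g k) := by
  rw [← Finset.mul_prod_erase _ _ hj]
  congr 1
  · simp only [rowShift, if_true]; ring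
  · apply Finset.prod_congr rfl
    intro k hk
    simp only [rowShift, if_neg (Finset.ne_of_mem_erase hk)]

/-- the Yangian-type exchange relations between `𝒜_n` and `ℬ_n`, `𝒞_n`
hold pointwise at every point with pairwise distinct `γ_{n1}, …, γ_{nn}`. -/
theorem yangian_AB_AC_relations (ℏ : ℝ) (hℏ : 0 < ℏ) (n : ℕ) (hn : 1 ≤ n)
    (t u : Row) (f : Row → ℂ) (lam mu : ℂ) (g : Row)
    (hg : ∀ j ∈ Icc 1 n, ∀ s ∈ Icc 1 n, j ≠ s → g j ≠ g s) :
    (lam - mu + Complex.I * ℏ) * Aop n lam (Bop ℏ n t mu f) g =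
        (lam - mu) * Bop ℏ n t mu (Aop n lam f) g +
          Complex.I * ℏ * Aop n mu (Bop ℏ n t lam f) g ∧
    (lam - mu + Complex.I * ℏ) * Aop n mu (Cop ℏ n u lam f) g =
        (lam - mu) * Cop ℏ n u lam (Aop n mu f) g +
          Complex.I * ℏ * Aop n lam (Cop ℏ n u mu f) g := by
  constructor
  · simp only [Aop, Bop, Finset.mul_sum]
    rw [← Finset.sum_add_distrib]
    apply Finset.sum_congr rfl
    intro j hj
    rw [prod_rowShift_aux n j hj, ← Finset.mul_prod_erase _ (fun k => lam - g k) hj,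
      ← Finset.mul_prod_erase _ (fun k => mu - g k) hj]
    simp only [Finset.prod_div_distrib]
    ring
  · simp only [Aop, Cop, mul_neg, Finset.mul_sum]
    rw [← neg_add, ← Finset.sum_add_distrib]
    congr 1
    apply Finset.sum_congr rfl
    intro j hj
    rw [prod_rowShift_aux n j hj, ← Finset.mul_prod_erase _ (fun k => lam - g k) hj,
      ← Finset.mul_prod_erase _ (fun k => mu - g k) hj]
    simp only [Finset.prod_div_distrib]
    ring
end
end

section
/- Fix ℏ > 0 and n ≥ 1. For every function f, all λ, μ ∈ ℂ, and every point γ such that for all 1 ≤ j < s ≤ n the difference γ_{nj} − γ_{ns} does not belong to {0, iℏ, −iℏ}, the operators ℬ_n and 𝒞_n commute pointwise: (ℬ_n(λ)(ℬ_n(μ)f))(γ) = (ℬ_n(μ)(ℬ_n(λ)f))(γ) and (𝒞_n(λ)(𝒞_n(μ)f))(γ) = (𝒞_n(μ)(𝒞_n(λ)f))(γ). -/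
open Finset

noncomputable section

/-- General form of the shift operators. -/
def Gop (I : Finset ℕ) (c : ℂ) (w : ℂ → ℂ) (lam : ℂ) (f : Row → ℂ) (g : Row) : ℂ :=
  ∑ j ∈ I, (∏ s ∈ I.erase j, (lam - g s) / (g j - g s)) * w (g j) * f (rowShift c j g)

lemma rowShift_comm (c : ℂ) (j k : ℕ) (g : Row) :
    rowShift c j (rowShift c k g) = rowShift c k (rowShift c j g) := by
  funext i
  simp only [rowShift]
  split_ifs <;> rfl

lemma Gop_coeff (I : Finset ℕ) (c : ℂ) (lam mu : ℂ) (g : Row) (j k : ℕ)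
    (hj : j ∈ I) (hk : k ∈ I) (hjk : j ≠ k) :
    (∏ s ∈ I.erase j, (lam - g s) / (g j - g s)) *
      (∏ s ∈ I.erase k, (mu - rowShift c j g s) / (rowShift c j g k - rowShift c j g s)) =
    ((lam - g k) / (g j - g k)) * ((mu - (g j + c)) / (g k - (g j + c))) *
      ((∏ s ∈ (I.erase j).erase k, (lam - g s)) * (∏ s ∈ (I.erase j).erase k, (mu - g s)) *
       (∏ s ∈ (I.erase j).erase k, (g j - g s))⁻¹ *
        (∏ s ∈ (I.erase j).erase k, (g k - g s))⁻¹) := by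
  have h1 := Finset.mul_prod_erase (I.erase j) (fun s => (lam - g s) / (g j - g s))
    (Finset.mem_erase.2 ⟨hjk.symm, hk⟩)
  have h2 := Finset.mul_prod_erase (I.erase k)
    (fun s => (mu - rowShift c j g s) / (rowShift c j g k - rowShift c j g s))
    (Finset.mem_erase.2 ⟨hjk, hj⟩)
  have h3 : ∏ s ∈ (I.erase k).erase j,
      (mu - rowShift c j g s) / (rowShift c j g k - rowShift c j g s) =
      ∏ s ∈ (I.erase j).erase k, (mu - g s) / (g k - g s) := by
    rw [Finset.erase_right_comm]
    refine Finset.prod_congr rfl fun s hs => ?_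
    have : s ≠ j := (Finset.mem_erase.1 (Finset.mem_erase.1 hs).2).1
    simp [rowShift, this, hjk.symm]
  rw [← h1, ← h2, h3]
  simp only [Finset.prod_div_distrib]
  simp only [rowShift, hjk.symm, if_true, if_false]
  ring

lemma Gop_comm (I : Finset ℕ) (c : ℂ) (w : ℂ → ℂ) (lam mu : ℂ) (f : Row → ℂ) (g : Row)
    (hg : ∀ j ∈ I, ∀ s ∈ I, j ≠ s → g j - g s ≠ 0 ∧ g j - g s ≠ c ∧ g j - g s ≠ -c) :
    Gop I c w lam (Gop I c w mu f) g = Gop I c w mu (Gop I c w lam f) g := by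
  let E : ℂ → ℂ → ℕ → ℕ → ℂ := fun lam mu j k =>
    ((∏ s ∈ I.erase j, (lam - g s) / (g j - g s)) *
      (∏ s ∈ I.erase k, (mu - rowShift c j g s) / (rowShift c j g k - rowShift c j g s))) *
      (w (g j) * w (rowShift c j g k) * f (rowShift c k (rowShift c j g)))
  have hE : ∀ l m, Gop I c w l (Gop I c w m f) g = ∑ j ∈ I, ∑ k ∈ I, E l m j k := by
    intro l m
    simp only [Gop, Finset.mul_sum]
    refine Finset.sum_congr rfl fun j _ => Finset.sum_congr rfl fun k _ => ?_
    simp only [E]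
    ring
  have key : ∀ j ∈ I, ∀ k ∈ I,
      E lam mu j k - E mu lam j k = -(E lam mu k j - E mu lam k j) := by
    intro j hj k hk
    by_cases hjk : j = k
    · subst hjk
      have : E lam mu j j = E mu lam j j := by
        simp only [E]
        congr 1
        simp only [← Finset.prod_mul_distrib]
        refine Finset.prod_congr rfl fun s hs => ?_
        have : s ≠ j := (Finset.mem_erase.1 hs).1
        simp only [rowShift, this, if_false]
        ring
      rw [this]; ring
    · have hkj : k ≠ j := Ne.symm hjk
      obtain ⟨h0, h1, h2⟩ := hg j hj k hk hjk
      simp only [E]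
      rw [Gop_coeff I c lam mu g j k hj hk hjk, Gop_coeff I c mu lam g j k hj hk hjk,
        Gop_coeff I c lam mu g k j hk hj hkj, Gop_coeff I c mu lam g k j hk hj hkj,
        Finset.erase_right_comm (a := k) (b := j), rowShift_comm c j k]
      have e1 : rowShift c j g k = g k := by simp [rowShift, hkj]
      have e2 : rowShift c k g j = g j := by simp [rowShift, hjk]
      rw [e1, e2]
      generalize (∏ s ∈ (I.erase j).erase k, (lam - g s)) = A
      generalize (∏ s ∈ (I.erase j).erase k, (mu - g s)) = B
      generalize (∏ s ∈ (I.erase j).erase k, (g j - g s))⁻¹ = C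
      generalize (∏ s ∈ (I.erase j).erase k, (g k - g s))⁻¹ = D
      generalize f _ = F
      generalize w (g j) = W1
      generalize w (g k) = W2
      generalize g j = a at *
      generalize g k = b at *
      have n1 : b - a ≠ 0 := fun h => h0 (by linear_combination -h)
      have n2 : b - (a + c) ≠ 0 := fun h => h2 (by linear_combination -h)
      have n3 : a - (b + c) ≠ 0 := fun h => h1 (by linear_combination h)
      have q : (lam - b) / (a - b) * ((mu - (a + c)) / (b - (a + c)))
          - (mu - b) / (a - b) * ((lam - (a + c)) / (b - (a + c)))
          = (lam - mu) / (a - b) := by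
        field_simp
        ring
      have q' : (lam - a) / (b - a) * ((mu - (b + c)) / (a - (b + c)))
          - (mu - a) / (b - a) * ((lam - (b + c)) / (a - (b + c)))
          = -((lam - mu) / (a - b)) := by
        rw [← div_neg, neg_sub]
        field_simp
        ring
      linear_combination (A * B * C * D * (W1 * W2 * F)) * (q + q')
  have hs : ∑ j ∈ I, ∑ k ∈ I, (E lam mu j k - E mu lam j k) =
      -∑ j ∈ I, ∑ k ∈ I, (E lam mu j k - E mu lam j k) := by
    conv_rhs => rw [Finset.sum_comm]
    simp only [← Finset.sum_neg_distrib]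
    exact Finset.sum_congr rfl fun j hj => Finset.sum_congr rfl fun k hk => key j hj k hk
  rw [hE, hE, ← sub_eq_zero]
  simp only [← Finset.sum_sub_distrib]
  exact self_eq_neg.1 hs

/-- the operators `ℬ_n(λ)` commute among themselves, and likewise the
`𝒞_n(λ)`, pointwise at every point where all same-level differences avoid
`{0, iℏ, −iℏ}`. -/
theorem B_comm_and_C_comm (ℏ : ℝ) (hℏ : 0 < ℏ) (n : ℕ) (hn : 1 ≤ n)
    (t u : Row) (f : Row → ℂ) (lam mu : ℂ) (g : Row)
    (hg : ∀ j ∈ Icc 1 n, ∀ s ∈ Icc 1 n, j < s →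
      g j - g s ≠ 0 ∧ g j - g s ≠ Complex.I * ℏ ∧ g j - g s ≠ -(Complex.I * ℏ)) :
    Bop ℏ n t lam (Bop ℏ n t mu f) g = Bop ℏ n t mu (Bop ℏ n t lam f) g ∧
    Cop ℏ n u lam (Cop ℏ n u mu f) g = Cop ℏ n u mu (Cop ℏ n u lam f) g := by
  have hg' : ∀ j ∈ Icc 1 n, ∀ s ∈ Icc 1 n, j ≠ s →
      g j - g s ≠ 0 ∧ g j - g s ≠ Complex.I * ℏ ∧ g j - g s ≠ -(Complex.I * ℏ) := by
    intro j hj s hs hjs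
    rcases lt_or_gt_of_ne hjs with h | h
    · exact hg j hj s hs h
    · obtain ⟨a, b, c⟩ := hg s hs j hj h
      exact ⟨fun e => a (by linear_combination -e), fun e => c (by linear_combination -e),
        fun e => b (by linear_combination -e)⟩
  constructor
  · refine Gop_comm (Icc 1 n) (-(Complex.I * ℏ))
      (fun x => ∏ r ∈ Icc 1 (n + 1), (x - t r - Complex.I * ℏ / 2)) lam mu f g ?_
    intro j hj s hs hjs
    obtain ⟨a, b, c⟩ := hg' j hj s hs hjs
    exact ⟨a, c, by rwa [neg_neg]⟩
  · have hC : ∀ l h, Cop ℏ n u l h = Gop (Icc 1 n) (Complex.I * ℏ)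
        (fun x => -∏ r ∈ Icc 1 (n - 1), (x - u r + Complex.I * ℏ / 2)) l h := by
      intro l h
      funext x
      simp only [Cop, Gop, mul_neg, neg_mul, Finset.sum_neg_distrib]
    simp only [hC]
    exact Gop_comm _ _ _ _ _ _ _ hg'
end
end
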